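/- Let b ≥ 2 and k > 2b be integers and let 𝒜 = {A_1, …, A_n} be subsets of ℝ² with f_{k+1}(𝒜) = 0 and such that for every σ with |σ| ∈ {k, k+1} the set A_σ is open (possibly empty) and has at most b path-connected components. For every σ ⊆ {1, …, n} with |σ| = k+1 and A_σ ≠ ∅ choose b distinct points of A_σ that include at least one point from each path-connected component of A_σ; let W be the set of all chosen points, so |W| = b·f_k(𝒜). Then one can choose, for every k-element τ ⊆ {1, …, n} having at least one chosen point in A_τ, a forest G_τ on the chosen points lying in A_τ whose restriction to each path-connected component of A_τ is a tree on the chosen points in that component, together with a drawing of G_τ inside A_τ, such that the multigraph G on vertex set W formed by the union of all G_τ admits a crossing-free drawing inside ⋃𝒜 (so G is a planar multigraph) and moreover |E(G)| ≤ 3·|W| + k·(b−1)·f_k(𝒜). -/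

import Mathlib

/-- `NerveTop A k` is the set of index sets `σ` with `|σ| = k+1` and `⋂ i ∈ σ, A i ≠ ∅`,
i.e. the `k`-dimensional faces of the nerve of `𝒜`. -/
abbrev NerveTop {α : Type*} {n : ℕ} (A : Fin n → Set α) (k : ℕ) : Type _ :=
  {σ : Finset (Fin n) // σ.card = k + 1 ∧ (⋂ i ∈ σ, A i).Nonempty}

/-- `fNum A k` is `f_k(𝒜)`: the number of subsets `σ` of the index set with
`|σ| = k+1` such that `⋂ i ∈ σ, A i` is nonempty. -/
noncomputable def fNum {α : Type*} {n : ℕ} (A : Fin n → Set α) (k : ℕ) : ℕ :=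
  Nat.card (NerveTop A k)

/-- A set `S` has at most `b` path-connected components: there are `b` points such that
every point of `S` can be joined inside `S` to one of them. -/
def AtMostComponents {X : Type*} [TopologicalSpace X] (b : ℕ) (S : Set X) : Prop :=
  ∃ g : Fin b → X, ∀ x ∈ S, ∃ j : Fin b, JoinedIn S x (g j)

section PartPA

open Set Complex in
lemma vk_lift (f : ℝ × ℝ → ℂ) (hf : Continuous f) (h0 : ∀ x, f x ≠ 0) :
    ∃ L : ℝ × ℝ → ℂ, Continuous L ∧ ∀ x, Complex.exp (L x) = f x := by
  rcases Complex.isCoveringMapOn_exp.existsUnique_continuousMap_lifts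
    (A := ℝ × ℝ) ⟨f, hf⟩ (a₀ := (0,0)) (e₀ := Complex.log (f (0,0))) (Complex.exp_log (h0 _))
    (fun x => h0 x) with ⟨F, ⟨-, hF⟩, -⟩
  exact ⟨F, F.continuous, fun x => congrFun hF x⟩

/-- two continuous logarithms have the same increments -/
lemma vk_lift_unique (L M : ℝ → ℂ) (hL : Continuous L) (hM : Continuous M)
    (h : ∀ t, Complex.exp (L t) = Complex.exp (M t)) : L 1 - L 0 = M 1 - M 0 := by
  have h1 : ∀ t, ∃ n : ℤ, L t - M t = n * (2 * Real.pi * Complex.I) := by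
    intro t
    obtain ⟨n, hn⟩ := Complex.exp_eq_exp_iff_exists_int.1 (h t)
    exact ⟨n, by rw [hn]; ring⟩
  choose n hn using h1
  have h2 : Continuous fun t => ((L t - M t) / (2 * Real.pi * Complex.I)).re := by fun_prop
  have h3 : (fun t => ((L t - M t) / (2 * Real.pi * Complex.I)).re) = fun t => (n t : ℝ) := by
    funext t
    rw [hn t, mul_div_assoc, div_self Complex.two_pi_I_ne_zero]
    simp
  rw [h3] at h2
  have h4 : Continuous n := by
    have := Int.isClosedEmbedding_coe_real.isInducing.continuous_iff (f := n)
    exact this.2 h2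
  have h5 : n 1 = n 0 := by
    have := PreconnectedSpace.constant (Y := ℤ) (α := ℝ) inferInstance h4 (x := 1) (y := 0)
    exact this
  have e1 := hn 1
  have e0 := hn 0
  rw [h5] at e1
  linear_combination e1 - e0

/-- van Kampen and Flores for `K₅`. -/
theorem vk_flores (r : Fin 5 → ℂ) (P : Fin 5 → Fin 5 → ℝ → ℂ)
    (hc : ∀ i j, Continuous (P i j)) (h0 : ∀ i j, i ≠ j → P i j 0 = r i)
    (h1 : ∀ i j, i ≠ j → P i j 1 = r j)
    (hd : ∀ a b c d : Fin 5, a ≠ b → c ≠ d → a ≠ c → a ≠ d → b ≠ c → b ≠ d →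
      ∀ s t, P a b s ≠ P c d t) : False := by
  have hd0 : ∀ v a b : Fin 5, v ≠ a → v ≠ b → a ≠ b → ∀ t, P a b t - r v ≠ 0 := by
    intro v a b hva hvb hab t h
    obtain ⟨d, hdv, hda, hdb⟩ : ∃ d : Fin 5, d ≠ v ∧ d ≠ a ∧ d ≠ b := by
      have : ∀ v a b : Fin 5, ∃ d : Fin 5, d ≠ v ∧ d ≠ a ∧ d ≠ b := by decide
      exact this v a b
    refine hd a b v d hab hdv.symm hva.symm hda.symm hvb.symm hdb.symm t 0 ?_
    rw [h0 _ _ hdv.symm]; exact sub_eq_zero.1 h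
  have hr : ∀ v a : Fin 5, v ≠ a → r a - r v ≠ 0 := by
    intro v a hva
    obtain ⟨d, hdv, hda⟩ : ∃ d : Fin 5, d ≠ v ∧ d ≠ a := by
      revert v a; decide
    have := hd0 v a d hva hdv.symm hda.symm 0
    rwa [h0 _ _ hda.symm] at this
  have hlift : ∀ v a b : Fin 5, ∃ L : ℝ → ℂ, Continuous L ∧
      (v ≠ a → v ≠ b → a ≠ b → ∀ t, Complex.exp (L t) = P a b t - r v) := by
    intro v a b
    by_cases h : v ≠ a ∧ v ≠ b ∧ a ≠ b
    · obtain ⟨L, hL, hL'⟩ := vk_lift (fun x => P a b x.1 - r v)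
        (((hc a b).comp continuous_fst).sub continuous_const)
        (fun x => hd0 v a b h.1 h.2.1 h.2.2 x.1)
      exact ⟨fun t => L (t, 0), by fun_prop, fun _ _ _ t => hL' (t, 0)⟩
    · exact ⟨fun _ => 0, continuous_const, fun x y z => absurd ⟨x, y, z⟩ h⟩
  choose L hLc hL using hlift
  have hsq : ∀ a b c d : Fin 5, a ≠ b → c ≠ d → a ≠ c → a ≠ d → b ≠ c → b ≠ d →
      (L c a b 1 - L c a b 0) + (L b c d 1 - L b c d 0)
        = (L d a b 1 - L d a b 0) + (L a c d 1 - L a c d 0) := by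
    intro a b c d hab hcd hac had hbc hbd
    obtain ⟨M, hM, hM'⟩ := vk_lift (fun x => P a b x.1 - P c d x.2)
      (((hc a b).comp continuous_fst).sub ((hc c d).comp continuous_snd))
      (fun x => sub_ne_zero.2 (hd a b c d hab hcd hac had hbc hbd x.1 x.2))
    have e1 := vk_lift_unique (fun t => M (t, 0)) (L c a b) (by fun_prop) (hLc _ _ _)
      (fun t => by rw [hM', hL c a b hac.symm hbc.symm hab, h0 _ _ hcd])
    have e2 := vk_lift_unique (fun t => M (t, 1)) (L d a b) (by fun_prop) (hLc _ _ _)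
      (fun t => by rw [hM', hL d a b had.symm hbd.symm hab, h1 _ _ hcd])
    have e3 := vk_lift_unique (fun t => M (0, t)) (fun t => L a c d t + Real.pi * Complex.I)
      (by fun_prop) ((hLc _ _ _).add continuous_const)
      (fun t => by
        rw [hM', Complex.exp_add, hL a c d hac had hcd, Complex.exp_pi_mul_I]
        simp only [h0 _ _ hab]; ring)
    have e4 := vk_lift_unique (fun t => M (1, t)) (fun t => L b c d t + Real.pi * Complex.I)
      (by fun_prop) ((hLc _ _ _).add continuous_const)
      (fun t => by
        rw [hM', Complex.exp_add, hL b c d hbc hbd hcd, Complex.exp_pi_mul_I]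
        simp only [h1 _ _ hab]; ring)
    linear_combination -e1 + e2 + e3 - e4
  -- normalised logarithms
  let lam : Fin 5 → Fin 5 → ℂ := fun v a =>
    if v < a then Complex.log (r a - r v) else Complex.log (r v - r a) + Real.pi * Complex.I
  have hlam : ∀ v a, v ≠ a → Complex.exp (lam v a) = r a - r v := by
    intro v a hva
    by_cases h : v < a
    · simp only [lam, h, if_true]; exact Complex.exp_log (hr v a hva)
    · simp only [lam, h, if_false]
      rw [Complex.exp_add, Complex.exp_log (hr a v hva.symm), Complex.exp_pi_mul_I]; ring
  let sg : Fin 5 → Fin 5 → ℤ := fun c b => if b < c then 1 else -1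
  have hsg : ∀ c b, c ≠ b → lam c b - lam b c = sg c b * (Real.pi * Complex.I) := by
    intro c b hcb
    rcases lt_or_gt_of_ne hcb with h | h
    · simp [lam, sg, h, h.not_gt]
    · simp [lam, sg, h, h.not_gt]
  have hn : ∀ v a b, ∃ n : ℤ, v ≠ a → v ≠ b → a ≠ b →
      L v a b 1 - L v a b 0 = lam v b - lam v a + n * (2 * Real.pi * Complex.I) := by
    intro v a b
    by_cases h : v ≠ a ∧ v ≠ b ∧ a ≠ b
    · obtain ⟨hva, hvb, hab⟩ := h
      have e : Complex.exp (L v a b 1 - L v a b 0) = Complex.exp (lam v b - lam v a) := by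
        rw [Complex.exp_sub, Complex.exp_sub, hlam _ _ hva, hlam _ _ hvb,
          hL v a b hva hvb hab, hL v a b hva hvb hab, h0 _ _ hab, h1 _ _ hab]
      obtain ⟨n, hn⟩ := Complex.exp_eq_exp_iff_exists_int.1 e
      exact ⟨n, fun _ _ _ => hn⟩
    · exact ⟨0, fun x y z => absurd ⟨x, y, z⟩ h⟩
  choose n hn using hn
  have key : ∀ a b c d : Fin 5, a ≠ b → c ≠ d → a ≠ c → a ≠ d → b ≠ c → b ≠ d →
      2 * (n c a b + n b c d - n d a b - n a c d) + (sg c b + sg a c + sg b d + sg d a) = 0 := by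
    intro a b c d hab hcd hac had hbc hbd
    have e := hsq a b c d hab hcd hac had hbc hbd
    rw [hn c a b hac.symm hbc.symm hab, hn b c d hbc hbd hcd, hn d a b had.symm hbd.symm hab,
      hn a c d hac had hcd] at e
    have e1 := hsg c b hbc.symm
    have e2 := hsg a c hac
    have e3 := hsg b d hbd
    have e4 := hsg d a had.symm
    have hpi : ((Real.pi : ℂ) * Complex.I) ≠ 0 := by
      simp [Real.pi_ne_zero]
    have : ((2 * (n c a b + n b c d - n d a b - n a c d)
        + (sg c b + sg a c + sg b d + sg d a) : ℤ) : ℂ) * (Real.pi * Complex.I) = 0 := by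
      push_cast
      linear_combination e - e1 - e2 - e3 - e4
    have := (mul_eq_zero.1 this).resolve_right hpi
    exact_mod_cast this
  have k1 := key 0 1 2 3
  have k2 := key 0 1 2 4
  have k3 := key 0 1 3 4
  have k4 := key 0 2 1 3
  have k5 := key 0 2 1 4
  have k6 := key 0 2 3 4
  have k7 := key 0 3 1 2
  have k8 := key 0 3 1 4
  have k9 := key 0 3 2 4
  have k10 := key 0 4 1 2
  have k11 := key 0 4 1 3
  have k12 := key 0 4 2 3
  have k13 := key 1 2 3 4
  have k14 := key 1 3 2 4
  have k15 := key 1 4 2 3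
  simp [sg] at k1 k2 k3 k4 k5 k6 k7 k8 k9 k10 k11 k12 k13 k14 k15
  omega

end PartPA

section PartPB

/-- A graph can be mapped to the plane so that disjoint edges are mapped to disjoint connected sets. -/
def PhiG {V : Type*} (G : SimpleGraph V) : Prop :=
  ∃ (r : V → ℂ) (Q : V → V → Set ℂ), (∀ u v, G.Adj u v → JoinedIn (Q u v) (r u) (r v)) ∧
    ∀ a b c d, G.Adj a b → G.Adj c d → a ≠ c → a ≠ d → b ≠ c → b ≠ d → Disjoint (Q a b) (Q c d)

lemma PhiG.mono {V : Type*} {G H : SimpleGraph V} (h : H ≤ G) (hG : PhiG G) : PhiG H := by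
  obtain ⟨r, Q, h1, h2⟩ := hG
  exact ⟨r, Q, fun u v huv => h1 u v (h huv), fun a b c d h3 h4 => h2 a b c d (h h3) (h h4)⟩

lemma PhiG.noK5 {V : Type*} {G : SimpleGraph V} (hG : PhiG G) (f : Fin 5 → V)
    (hf : ∀ i j, i ≠ j → G.Adj (f i) (f j)) : False := by
  obtain ⟨r, Q, h1, h2⟩ := hG
  have hne : ∀ i j, i ≠ j → f i ≠ f j := fun i j hij => (hf i j hij).ne
  have hP : ∀ i j : Fin 5, ∃ P : ℝ → ℂ, Continuous P ∧ (i ≠ j → P 0 = r (f i) ∧ P 1 = r (f j) ∧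
      ∀ t, P t ∈ Q (f i) (f j)) := by
    intro i j
    by_cases hij : i = j
    · exact ⟨fun _ => 0, continuous_const, fun h => absurd hij h⟩
    · have hJ := h1 _ _ (hf i j hij)
      refine ⟨hJ.somePath.extend, hJ.somePath.continuous_extend, fun _ => ⟨by simp, by simp, ?_⟩⟩
      intro t
      have : hJ.somePath.extend t ∈ Set.range hJ.somePath.extend := ⟨t, rfl⟩
      rw [Path.extend_range] at this
      obtain ⟨s, hs⟩ := this
      rw [← hs]; exact hJ.somePath_mem s
  choose P hPc hP using hP
  refine vk_flores (fun i => r (f i)) P hPc (fun i j h => (hP i j h).1)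
    (fun i j h => (hP i j h).2.1) ?_
  intro a b c d hab hcd hac had hbc hbd s t heq
  have hdis := h2 _ _ _ _ (hf a b hab) (hf c d hcd) (hne _ _ hac) (hne _ _ had)
    (hne _ _ hbc) (hne _ _ hbd)
  exact Set.disjoint_left.1 hdis ((hP a b hab).2.2 s) (heq ▸ (hP c d hcd).2.2 t)

/-- contraction of the edge `xy` into `x`, leaving `y` isolated -/
def contrG {V : Type*} (G : SimpleGraph V) (x y : V) : SimpleGraph V where
  Adj u v := u ≠ v ∧ u ≠ y ∧ v ≠ y ∧ (G.Adj u v ∨ (u = x ∧ G.Adj y v) ∨ (v = x ∧ G.Adj u y))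
  symm := ⟨by
    rintro u v ⟨h1, h2, h3, h4⟩
    refine ⟨h1.symm, h3, h2, ?_⟩
    rcases h4 with h | ⟨h, h'⟩ | ⟨h, h'⟩
    · exact Or.inl h.symm
    · exact Or.inr (Or.inr ⟨h, h'.symm⟩)
    · exact Or.inr (Or.inl ⟨h, h'.symm⟩)⟩
  loopless := ⟨fun u h => h.1 rfl⟩

lemma PhiG.contr {V : Type*} {G : SimpleGraph V} (hG : PhiG G) {x y : V} (hxy : G.Adj x y) :
    PhiG (contrG G x y) := by
  classical
  obtain ⟨r, Q, h1, h2⟩ := hG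
  refine ⟨r, fun u v => if G.Adj u v then Q u v else if u = x then Q x y ∪ Q y v
    else Q u y ∪ Q y x, ?_, ?_⟩
  · rintro u v ⟨huv, huy, hvy, h⟩
    by_cases hA : G.Adj u v
    · simp only [hA, if_true]; exact h1 _ _ hA
    · simp only [hA, if_false]
      rcases h with h | ⟨h, h'⟩ | ⟨h, h'⟩
      · exact absurd h hA
      · subst h
        simp only [if_true]
        exact ((h1 _ _ hxy).mono Set.subset_union_left).trans
          ((h1 _ _ h').mono Set.subset_union_right)
      · subst h
        simp only [huv, if_false]
        exact ((h1 _ _ h').mono Set.subset_union_left).trans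
          ((h1 _ _ hxy.symm).mono Set.subset_union_right)
  · -- every piece is a `Q` of an edge inside `{u, v, y}`, with `y` used only if `x ∈ {u, v}`
    have aux : ∀ u v z, (contrG G x y).Adj u v →
        z ∈ (if G.Adj u v then Q u v else if u = x then Q x y ∪ Q y v else Q u y ∪ Q y x) →
        ∃ p q, G.Adj p q ∧ z ∈ Q p q ∧ ((p = u ∧ q = v) ∨ ((u = x ∨ v = x) ∧
          (p = u ∨ p = v ∨ p = y) ∧ (q = u ∨ q = v ∨ q = y))) := by
      rintro u v z ⟨huv, huy, hvy, h⟩ hz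
      by_cases hA : G.Adj u v
      · simp only [hA, if_true] at hz
        exact ⟨u, v, hA, hz, Or.inl ⟨rfl, rfl⟩⟩
      · simp only [hA, if_false] at hz
        rcases h with h | ⟨h, h'⟩ | ⟨h, h'⟩
        · exact absurd h hA
        · subst h
          simp only [if_true] at hz
          rcases hz with hz | hz
          · exact ⟨u, y, hxy, hz, by tauto⟩
          · exact ⟨y, v, h', hz, by tauto⟩
        · subst h
          simp only [huv, if_false] at hz
          rcases hz with hz | hz
          · exact ⟨u, y, h', hz, by tauto⟩
          · exact ⟨y, v, hxy.symm, hz, by tauto⟩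
    intro a b c d hab hcd hac had hbc hbd
    rw [Set.disjoint_left]
    intro z hz1 hz2
    obtain ⟨p, q, hpq, hz, h⟩ := aux a b z hab hz1
    obtain ⟨p', q', hpq', hz', h'⟩ := aux c d z hcd hz2
    obtain ⟨-, hay, hby, -⟩ := hab
    obtain ⟨-, hcy, hdy, -⟩ := hcd
    refine Set.disjoint_left.1 (h2 p q p' q' hpq hpq' ?_ ?_ ?_ ?_) hz hz' <;> grind

open Classical in
lemma contrG_card {V : Type*} [Fintype V] (G : SimpleGraph V) {x y : V} (hxy : G.Adj x y) :
    G.edgeFinset.card ≤ (contrG G x y).edgeFinset.card + 1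
      + (G.neighborFinset x ∩ G.neighborFinset y).card := by
  set N := (G.neighborFinset y \ G.neighborFinset x).erase x with hN
  have hsub : (G.edgeFinset \ G.incidenceFinset y) ∪ N.image (fun v => s(x, v))
      ⊆ (contrG G x y).edgeFinset := by
    intro e he
    rw [Finset.mem_union] at he
    rw [SimpleGraph.mem_edgeFinset]
    rcases he with he | he
    · rw [Finset.mem_sdiff, SimpleGraph.mem_edgeFinset, SimpleGraph.mem_incidenceFinset] at he
      obtain ⟨he1, he2⟩ := he
      induction e with | _ u v => ?_
      rw [SimpleGraph.mem_edgeSet] at he1 ⊢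
      rw [SimpleGraph.mk'_mem_incidenceSet_iff] at he2
      refine ⟨he1.ne, ?_, ?_, Or.inl he1⟩
      · rintro rfl; exact he2 ⟨he1, Or.inl rfl⟩
      · rintro rfl; exact he2 ⟨he1, Or.inr rfl⟩
    · rw [Finset.mem_image] at he
      obtain ⟨v, hv, rfl⟩ := he
      rw [SimpleGraph.mem_edgeSet]
      simp only [hN, Finset.mem_erase, Finset.mem_sdiff, SimpleGraph.mem_neighborFinset] at hv
      exact ⟨hv.1.symm, hxy.ne, hv.2.1.ne', Or.inr (Or.inl ⟨rfl, hv.2.1⟩)⟩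
  have hdisj : Disjoint (G.edgeFinset \ G.incidenceFinset y) (N.image (fun v => s(x, v))) := by
    rw [Finset.disjoint_left]
    intro e he he'
    rw [Finset.mem_image] at he'
    obtain ⟨v, hv, rfl⟩ := he'
    simp only [hN, Finset.mem_erase, Finset.mem_sdiff, SimpleGraph.mem_neighborFinset] at hv
    rw [Finset.mem_sdiff, SimpleGraph.mem_edgeFinset, SimpleGraph.mem_edgeSet] at he
    exact hv.2.2 he.1
  have h1 := Finset.card_le_card hsub
  rw [Finset.card_union_of_disjoint hdisj, Finset.card_image_of_injective] at h1
  swap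
  · intro v v' h; exact Sym2.congr_right.1 h
  have h2 : (G.edgeFinset \ G.incidenceFinset y).card = G.edgeFinset.card - G.degree y := by
    rw [Finset.card_sdiff_of_subset, SimpleGraph.card_incidenceFinset_eq_degree]
    exact SimpleGraph.incidenceFinset_subset G y
  have h3 : N.card + 1 + (G.neighborFinset x ∩ G.neighborFinset y).card = G.degree y := by
    rw [hN, Finset.card_erase_add_one, Finset.inter_comm, Finset.card_sdiff_add_card_inter,
      SimpleGraph.card_neighborFinset_eq_degree]
    simp [hxy.symm]
  have h4 : G.degree y ≤ G.edgeFinset.card := by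
    rw [← SimpleGraph.card_incidenceFinset_eq_degree]
    exact Finset.card_le_card (SimpleGraph.incidenceFinset_subset G y)
  omega

lemma five_adj {V : Type*} {G : SimpleGraph V} (hG : PhiG G) {a b c d e : V}
    (hab : G.Adj a b) (hac : G.Adj a c) (had : G.Adj a d) (hae : G.Adj a e)
    (hbc : G.Adj b c) (hbd : G.Adj b d) (hbe : G.Adj b e)
    (hcd : G.Adj c d) (hce : G.Adj c e) (hde : G.Adj d e) : False := by
  refine hG.noK5 ![a, b, c, d, e] ?_
  intro i j hij
  fin_cases i <;> fin_cases j <;> first | exact absurd rfl hij | skip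
  all_goals simp [hab, hac, had, hae, hbc, hbd, hbe, hcd, hce, hde, hab.symm, hac.symm, had.symm,
    hae.symm, hbc.symm, hbd.symm, hbe.symm, hcd.symm, hce.symm, hde.symm]

open Classical in
lemma mader_local {V : Type*} [Fintype V] {G : SimpleGraph V} (hG : PhiG G) (v : V)
    (h5 : G.degree v ≤ 5) (h0 : G.degree v ≠ 0)
    (h3 : ∀ x y, G.Adj x y → 3 ≤ (G.neighborFinset x ∩ G.neighborFinset y).card) : False := by
  set F := G.neighborFinset v with hF
  have hFc : F.card = G.degree v := SimpleGraph.card_neighborFinset_eq_degree G v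
  have hFv : ∀ x ∈ F, G.Adj v x := fun x hx => by simpa [hF] using hx
  have key : ∀ x ∈ F, 3 ≤ (F ∩ G.neighborFinset x).card := fun x hx => h3 v x (hFv x hx)
  have uniq : ∀ x ∈ F, ∀ y ∈ F, ∀ z ∈ F, y ≠ x → z ≠ x → ¬ G.Adj x y → ¬ G.Adj x z → y = z := by
    intro x hx y hy z hz hyx hzx hxy hxz
    by_contra hyz
    have hsub : F ∩ G.neighborFinset x ⊆ F \ {x, y, z} := by
      intro t ht
      simp only [Finset.mem_inter, SimpleGraph.mem_neighborFinset] at ht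
      simp only [Finset.mem_sdiff, Finset.mem_insert, Finset.mem_singleton, not_or]
      refine ⟨ht.1, ?_, ?_, ?_⟩
      · rintro rfl; exact ht.2.ne rfl
      · rintro rfl; exact hxy ht.2
      · rintro rfl; exact hxz ht.2
    have h1 := Finset.card_le_card hsub
    rw [Finset.card_sdiff_of_subset, Finset.card_eq_three.2 ⟨x, y, z, hyx.symm, hzx.symm, hyz, rfl⟩]
      at h1
    · have := key x hx; omega
    · intro t; simp only [Finset.mem_insert, Finset.mem_singleton]; rintro (rfl | rfl | rfl) <;>
        assumption
  by_cases hcl : ∀ x ∈ F, ∀ y ∈ F, x ≠ y → G.Adj x y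
  · obtain ⟨x, hx⟩ : F.Nonempty := by
      rw [← Finset.card_pos]; omega
    obtain ⟨T, hT, hT3⟩ := Finset.exists_subset_card_eq (key x hx)
    obtain ⟨p, q, u, hpq, hpu, hqu, rfl⟩ := Finset.card_eq_three.1 hT3
    have hp := hT (show p ∈ ({p, q, u} : Finset V) by simp)
    have hq := hT (show q ∈ ({p, q, u} : Finset V) by simp)
    have hu := hT (show u ∈ ({p, q, u} : Finset V) by simp)
    simp only [Finset.mem_inter, SimpleGraph.mem_neighborFinset] at hp hq hu
    exact five_adj hG (hFv x hx) (hFv p hp.1) (hFv q hq.1) (hFv u hu.1) hp.2 hq.2 hu.2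
      (hcl _ hp.1 _ hq.1 hpq) (hcl _ hp.1 _ hu.1 hpu) (hcl _ hq.1 _ hu.1 hqu)
  · push Not at hcl
    obtain ⟨a, ha, c, hc, hac, hnac⟩ := hcl
    have hsub : F ∩ G.neighborFinset a ⊆ F \ {a, c} := by
      intro t ht
      simp only [Finset.mem_inter, SimpleGraph.mem_neighborFinset] at ht
      simp only [Finset.mem_sdiff, Finset.mem_insert, Finset.mem_singleton, not_or]
      refine ⟨ht.1, ?_, ?_⟩
      · rintro rfl; exact ht.2.ne rfl
      · rintro rfl; exact hnac ht.2
    obtain ⟨T, hT, hT3⟩ := Finset.exists_subset_card_eq ((key a ha).trans (Finset.card_le_card hsub))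
    obtain ⟨p, q, u, hpq, hpu, hqu, rfl⟩ := Finset.card_eq_three.1 hT3
    have hp := hT (show p ∈ ({p, q, u} : Finset V) by simp)
    have hq := hT (show q ∈ ({p, q, u} : Finset V) by simp)
    have hu := hT (show u ∈ ({p, q, u} : Finset V) by simp)
    simp only [Finset.mem_sdiff, Finset.mem_insert, Finset.mem_singleton, not_or] at hp hq hu
    have adja : ∀ t ∈ F, t ≠ a → t ≠ c → G.Adj a t := by
      intro t ht hta htc
      by_contra hn
      exact htc (uniq a ha t ht c hc hta hac.symm hn hnac)
    have adjc : ∀ t ∈ F, t ≠ a → t ≠ c → G.Adj c t := by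
      intro t ht hta htc
      by_contra hn
      exact hta (uniq c hc t ht a ha htc hac hn (fun h => hnac h.symm))
    -- the final configuration
    have fin : ∀ p q u, p ∈ F → q ∈ F → u ∈ F → p ≠ a → p ≠ c → q ≠ a → q ≠ c → u ≠ a → u ≠ c →
        p ≠ q → p ≠ u → q ≠ u → ¬ G.Adj p q → False := by
      intro p q u hp hq hu hpa hpc hqa hqc hua huc hpq hpu hqu hn
      have hup : G.Adj u p := by
        by_contra h
        exact hqu (uniq p hp q hq u hu hpq.symm hpu.symm hn (fun h' => h h'.symm))
      have huq : G.Adj u q := by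
        by_contra h
        exact hpu (uniq q hq p hp u hu hpq hqu.symm (fun h' => hn h'.symm) (fun h' => h h'.symm))
      have hap := adja p hp hpa hpc
      have hvp : v ≠ p := (hFv p hp).ne
      have lift : ∀ s t, G.Adj s t → s ≠ p → t ≠ p → (contrG G a p).Adj s t :=
        fun s t h1 h2 h3 => ⟨h1.ne, h2, h3, Or.inl h1⟩
      refine five_adj (hG.contr hap) (a := v) (b := u) (c := a) (d := c) (e := q)
        (lift _ _ (hFv u hu) hvp hpu.symm) (lift _ _ (hFv a ha) hvp hpa.symm)
        (lift _ _ (hFv c hc) hvp hpc.symm) (lift _ _ (hFv q hq) hvp hpq.symm)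
        (lift _ _ (adja u hu hua huc).symm hpu.symm hpa.symm)
        (lift _ _ (adjc u hu hua huc).symm hpu.symm hpc.symm)
        (lift _ _ huq hpu.symm hpq.symm)
        ⟨hac, hpa.symm, hpc.symm, Or.inr (Or.inl ⟨rfl, (adjc p hp hpa hpc).symm⟩)⟩
        (lift _ _ (adja q hq hqa hqc) hpa.symm hpq.symm)
        (lift _ _ (adjc q hq hqa hqc) hpc.symm hpq.symm)
    by_cases h1 : G.Adj p q
    · by_cases h2 : G.Adj p u
      · by_cases h3 : G.Adj q u
        · exact five_adj hG (hFv a ha) (hFv p hp.1) (hFv q hq.1) (hFv u hu.1)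
            (adja p hp.1 hp.2.1 hp.2.2) (adja q hq.1 hq.2.1 hq.2.2) (adja u hu.1 hu.2.1 hu.2.2)
            h1 h2 h3
        · exact fin q u p hq.1 hu.1 hp.1 hq.2.1 hq.2.2 hu.2.1 hu.2.2 hp.2.1 hp.2.2 hqu hpq.symm
            hpu.symm h3
      · exact fin p u q hp.1 hu.1 hq.1 hp.2.1 hp.2.2 hu.2.1 hu.2.2 hq.2.1 hq.2.2 hpu hpq
          hqu.symm h2
    · exact fin p q u hp.1 hq.1 hu.1 hp.2.1 hp.2.2 hq.2.1 hq.2.2 hu.2.1 hu.2.2 hpq hpu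
          hqu h1

open Classical in
theorem mader_aux {V : Type*} [Fintype V] (m : ℕ) : ∀ (s : Finset V) (G : SimpleGraph V), s.card = m →
    s.Nonempty → PhiG G → (∀ u v, G.Adj u v → u ∈ s) → G.edgeFinset.card + 2 ≤ 3 * s.card := by
  induction m with
  | zero =>
    intro s G hs hne
    rw [Finset.card_eq_zero] at hs
    subst hs; simp at hne
  | succ m ih =>
    intro s G hs hne hG hsupp
    rcases Nat.eq_zero_or_pos m with rfl | hm
    · have : G.edgeFinset = ∅ := by
        ext e
        induction e with | _ u v => ?_
        rw [SimpleGraph.mem_edgeFinset, SimpleGraph.mem_edgeSet]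
        simp only [Finset.notMem_empty, iff_false]
        intro h
        exact h.ne (Finset.card_le_one.1 hs.le u (hsupp u v h) v (hsupp v u h.symm))
      rw [this]
      simp; omega
    · by_contra hcon
      obtain ⟨X, hX, hXc⟩ := Finset.exists_subset_card_eq (s := G.edgeFinset) (n := 3 * s.card - 1)
        (by omega)
      obtain ⟨H, hHG, hHX⟩ : ∃ H : SimpleGraph V, H ≤ G ∧ H.edgeSet = X := by
        refine ⟨SimpleGraph.fromEdgeSet (X : Set (Sym2 V)), ?_, ?_⟩
        · intro u v huv
          rw [SimpleGraph.fromEdgeSet_adj] at huv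
          have := hX (Finset.mem_coe.1 huv.1)
          rwa [SimpleGraph.mem_edgeFinset, SimpleGraph.mem_edgeSet] at this
        · ext e
          rw [SimpleGraph.edgeSet_fromEdgeSet]
          constructor
          · intro h; exact h.1
          · intro h
            refine ⟨h, fun hd => ?_⟩
            exact SimpleGraph.not_isDiag_of_mem_edgeSet G (SimpleGraph.mem_edgeFinset.1 (hX h)) hd
      have hHc : H.edgeFinset.card = 3 * s.card - 1 := by
        rw [← hXc]
        congr 1
        ext e
        rw [SimpleGraph.mem_edgeFinset, hHX, Finset.mem_coe]
      have hPH := hG.mono hHG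
      have hsuppH : ∀ u v, H.Adj u v → u ∈ s := fun u v h => hsupp u v (hHG h)
      have h3 : ∀ x y, H.Adj x y → 3 ≤ (H.neighborFinset x ∩ H.neighborFinset y).card := by
        intro x y hxy
        have hys := hsuppH y x hxy.symm
        have hc := Finset.card_erase_of_mem hys
        have h1 := ih (s.erase y) (contrG H x y) (by omega)
          (by rw [← Finset.card_pos]; omega) (hPH.contr hxy) (by
            rintro u v ⟨h1, h2, h3, h4⟩
            refine Finset.mem_erase.2 ⟨h2, ?_⟩
            rcases h4 with h | ⟨h, h'⟩ | ⟨h, h'⟩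
            · exact hsuppH _ _ h
            · exact h ▸ hsuppH _ _ hxy
            · exact hsuppH _ _ h')
        have h2 := contrG_card H hxy
        omega
      have hdeg : ∀ v, v ∉ s → H.degree v = 0 := by
        intro v hv
        rw [← SimpleGraph.card_neighborFinset_eq_degree, Finset.card_eq_zero,
          Finset.eq_empty_iff_forall_notMem]
        intro u hu
        rw [SimpleGraph.mem_neighborFinset] at hu
        exact hv (hsuppH _ _ hu)
      obtain ⟨v, hv, hv5⟩ : ∃ v ∈ s, H.degree v ≤ 5 := by
        by_contra hc
        push Not at hc
        have h1 : ∑ v ∈ s, 6 ≤ ∑ v ∈ s, H.degree v := Finset.sum_le_sum fun v hv => hc v hv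
        have h2 : ∑ v ∈ s, H.degree v = ∑ v, H.degree v :=
          Finset.sum_subset (Finset.subset_univ _) fun v _ hv => hdeg v hv
        rw [h2, SimpleGraph.sum_degrees_eq_twice_card_edges, hHc, Finset.sum_const,
          smul_eq_mul] at h1
        omega
      have hv0 : H.degree v ≠ 0 := by
        intro h0
        rw [← SimpleGraph.card_neighborFinset_eq_degree, Finset.card_eq_zero,
          Finset.eq_empty_iff_forall_notMem] at h0
        have hc := Finset.card_erase_of_mem hv
        have h1 := ih (s.erase v) H (by omega)
          (by rw [← Finset.card_pos]; omega) hPH (by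
            intro u t hut
            refine Finset.mem_erase.2 ⟨?_, hsuppH _ _ hut⟩
            rintro rfl
            exact h0 t (by simpa using hut))
        omega
      exact mader_local hPH v hv5 hv0 h3

/-- planar-like graphs have at most `3 |V|` edges -/
theorem mader {V : Type*} [Fintype V] (G : SimpleGraph V) (hG : PhiG G) :
    Nat.card G.edgeSet ≤ 3 * Fintype.card V := by
  classical
  rw [Nat.card_eq_fintype_card, ← SimpleGraph.edgeFinset_card]
  rcases isEmpty_or_nonempty V with h | h
  · have : G.edgeFinset = ∅ := by
      ext e
      induction e with | _ u v => exact (h.false u).elim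
    rw [this]; simp
  · have := mader_aux _ Finset.univ G rfl Finset.univ_nonempty hG (by simp)
    rw [Finset.card_univ] at this
    convert (by omega : G.edgeFinset.card ≤ 3 * Fintype.card V)

end PartPB

section PartPC

open Set Metric Topology

/-- the plane -/
abbrev Pl := EuclideanSpace ℝ (Fin 2)

/-- a set contained in finitely many lines -/
def Thin (K : Set Pl) : Prop :=
  ∃ F : Set (Pl × Pl), F.Finite ∧ ∀ x ∈ K, ∃ l ∈ F, ∃ t : ℝ, x = l.1 + t • l.2

lemma Thin.empty : Thin ∅ := ⟨∅, Set.finite_empty, by simp⟩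

lemma Thin.union {K L : Set Pl} (hK : Thin K) (hL : Thin L) : Thin (K ∪ L) := by
  obtain ⟨F, hF, h⟩ := hK
  obtain ⟨G, hG, h'⟩ := hL
  refine ⟨F ∪ G, hF.union hG, ?_⟩
  rintro x (hx | hx)
  · obtain ⟨l, hl, t, ht⟩ := h x hx; exact ⟨l, Or.inl hl, t, ht⟩
  · obtain ⟨l, hl, t, ht⟩ := h' x hx; exact ⟨l, Or.inr hl, t, ht⟩

lemma Thin.mono {K L : Set Pl} (hK : Thin K) (h : L ⊆ K) : Thin L := by
  obtain ⟨F, hF, h'⟩ := hK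
  exact ⟨F, hF, fun x hx => h' x (h hx)⟩

lemma Thin.biUnion {ι : Type*} {s : Set ι} (hs : s.Finite) (K : ι → Set Pl)
    (h : ∀ i ∈ s, Thin (K i)) : Thin (⋃ i ∈ s, K i) := by
  induction s, hs using Set.Finite.induction_on with
  | empty => simpa using Thin.empty
  | insert _ _ ih =>
    rw [Set.biUnion_insert]
    exact (h _ (Set.mem_insert _ _)).union (ih fun i hi => h i (Set.mem_insert_of_mem _ hi))

lemma Thin.image {K : Set Pl} (hK : Thin K) (f : Pl → Pl) (B : Set (Pl →ᵃ[ℝ] Pl)) (hB : B.Finite)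
    (h : ∀ x, ∃ g ∈ B, f x = g x) : Thin (f '' K) := by
  obtain ⟨F, hF, h'⟩ := hK
  refine ⟨Set.image2 (fun l (g : Pl →ᵃ[ℝ] Pl) => (g l.1, g.linear l.2)) F B, hF.image2 _ hB, ?_⟩
  rintro _ ⟨x, hx, rfl⟩
  obtain ⟨l, hl, t, ht⟩ := h' x hx
  obtain ⟨g, hg, hx⟩ := h x
  refine ⟨_, ⟨l, hl, g, hg, rfl⟩, t, ?_⟩
  rw [hx, ht, add_comm, ← vadd_eq_add, AffineMap.map_vadd]
  simp [add_comm]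

/-- homeomorphisms preserving thin sets in both directions -/
def PLH (h : Pl ≃ₜ Pl) : Prop :=
  (∀ K, Thin K → Thin (h '' K)) ∧ (∀ K, Thin K → Thin (h.symm '' K))

lemma PLH.refl : PLH (Homeomorph.refl Pl) := ⟨fun K hK => by simpa using hK, fun K hK => by simpa using hK⟩

lemma PLH.symm {h : Pl ≃ₜ Pl} (hh : PLH h) : PLH h.symm := ⟨hh.2, by simpa using hh.1⟩

lemma PLH.trans {h g : Pl ≃ₜ Pl} (hh : PLH h) (hg : PLH g) : PLH (h.trans g) := by
  constructor
  · intro K hK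
    have := hg.1 _ (hh.1 K hK)
    rwa [← Set.image_comp] at this
  · intro K hK
    have := hh.2 _ (hg.2 K hK)
    rwa [← Set.image_comp] at this

/-- the moving homeomorphism -/
lemma exists_move (c y : Pl) (r : ℝ) (hr : 0 < r) (hy : dist y c < r) :
    ∃ h : Pl ≃ₜ Pl, PLH h ∧ h c = y ∧ ∀ x, 2 * r ≤ dist x c → h x = x := by
  let e0 : Pl →L[ℝ] ℝ := EuclideanSpace.proj 0
  let e1 : Pl →L[ℝ] ℝ := EuclideanSpace.proj 1
  have he0 : ∀ x, |e0 x| ≤ ‖x‖ := fun x => by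
    have := PiLp.norm_apply_le x 0; simpa [e0] using this
  have he1 : ∀ x, |e1 x| ≤ ‖x‖ := fun x => by
    have := PiLp.norm_apply_le x 1; simpa [e1] using this
  have hsum : ∀ x : Pl, ‖x‖ ≤ |e0 x| + |e1 x| := by
    intro x
    rw [EuclideanSpace.norm_eq]
    simp only [Fin.sum_univ_two, Real.norm_eq_abs]
    rw [Real.sqrt_le_left (by positivity)]
    change |e0 x| ^ 2 + |e1 x| ^ 2 ≤ _
    nlinarith [abs_nonneg (e0 x), abs_nonneg (e1 x)]
  let g : Pl → ℝ := fun x => max 0 (min (r - |e0 x - e0 c|) (r - |e1 x - e1 c|))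
  have hgL : ∀ x x', |g x - g x'| ≤ ‖x - x'‖ := by
    intro x x'
    have h0 := he0 (x - x')
    have h1 := he1 (x - x')
    rw [map_sub] at h0 h1
    refine (abs_max_sub_max_le_max _ _ _ _).trans (max_le (by simp) ?_)
    refine (abs_min_sub_min_le_max _ _ _ _).trans (max_le ?_ ?_)
    · refine le_trans ?_ h0
      have := abs_abs_sub_abs_le_abs_sub (e0 x' - e0 c) (e0 x - e0 c)
      rw [sub_sub_sub_cancel_right, abs_sub_comm (e0 x') (e0 x)] at this
      rw [sub_sub_sub_cancel_left]
      exact this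
    · refine le_trans ?_ h1
      have := abs_abs_sub_abs_le_abs_sub (e1 x' - e1 c) (e1 x - e1 c)
      rw [sub_sub_sub_cancel_right, abs_sub_comm (e1 x') (e1 x)] at this
      rw [sub_sub_sub_cancel_left]
      exact this
  -- the finitely many affine pieces
  let B : Set ((Pl →L[ℝ] ℝ) × ℝ) := {(0, 0), (-e0, r + e0 c), (e0, r - e0 c), (-e1, r + e1 c),
    (e1, r - e1 c)}
  have hBf : B.Finite := by simp [B]
  have hgB : ∀ x, ∃ p ∈ B, g x = p.1 x + p.2 := by
    intro x
    have key : g x = 0 ∨ g x = r - |e0 x - e0 c| ∨ g x = r - |e1 x - e1 c| := by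
      simp only [g]
      rcases max_choice 0 (min (r - |e0 x - e0 c|) (r - |e1 x - e1 c|)) with h | h
      · exact Or.inl h
      · rw [h]
        exact Or.inr (min_choice _ _)
    rcases key with h | h | h
    · exact ⟨(0, 0), by simp [B], by simpa using h⟩
    · rcases abs_choice (e0 x - e0 c) with h' | h' <;> rw [h'] at h
      · exact ⟨(-e0, r + e0 c), by simp [B], by rw [h]; simp; ring⟩
      · exact ⟨(e0, r - e0 c), by simp [B], by rw [h]; simp; ring⟩
    · rcases abs_choice (e1 x - e1 c) with h' | h' <;> rw [h'] at h
      · exact ⟨(-e1, r + e1 c), by simp [B], by rw [h]; simp; ring⟩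
      · exact ⟨(e1, r - e1 c), by simp [B], by rw [h]; simp; ring⟩
  have hBn : ∀ p ∈ B, ∀ x, |p.1 x| ≤ ‖x‖ := by
    intro p hp x
    simp only [B, Set.mem_insert_iff, Set.mem_singleton_iff] at hp
    rcases hp with rfl | rfl | rfl | rfl | rfl
    · simp
    · simpa using he0 x
    · simpa using he0 x
    · simpa using he1 x
    · simpa using he1 x
  let v : Pl := r⁻¹ • (y - c)
  have hv : ‖v‖ < 1 := by
    rw [dist_eq_norm] at hy
    simp only [v, norm_smul, norm_inv, Real.norm_eq_abs, abs_of_pos hr]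
    rw [inv_mul_lt_iff₀ hr]; simpa using hy
  have happ : ApproximatesLinearOn (fun x => x + g x • v)
      ((ContinuousLinearEquiv.refl ℝ Pl : Pl ≃L[ℝ] Pl) : Pl →L[ℝ] Pl) univ ‖v‖₊ := by
    intro x _ x' _
    have : (x + g x • v) - (x' + g x' • v) - (x - x') = (g x - g x') • v := by
      rw [sub_smul]; abel
    simp only [ContinuousLinearEquiv.coe_coe, ContinuousLinearEquiv.coe_refl', id]
    rw [this, norm_smul, mul_comm]
    exact mul_le_mul_of_nonneg_left (hgL x x') (norm_nonneg _)
  have hN : ‖((ContinuousLinearEquiv.refl ℝ Pl).symm : Pl →L[ℝ] Pl)‖₊ = 1 := by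
    have : ‖ContinuousLinearMap.id ℝ Pl‖ = 1 := ContinuousLinearMap.norm_id
    exact NNReal.eq this
  let h : Pl ≃ₜ Pl := happ.toHomeomorph _ (Or.inr (by rw [hN, inv_one]; exact hv))
  have hh : ∀ x, h x = x + g x • v := fun x => rfl
  refine ⟨h, ⟨fun K hK => ?_, fun K hK => ?_⟩, ?_, ?_⟩
  · refine hK.image h ((fun p : (Pl →L[ℝ] ℝ) × ℝ => (AffineMap.id ℝ Pl +
      (((p.1 : Pl →ₗ[ℝ] ℝ).smulRight v).toAffineMap + AffineMap.const ℝ Pl (p.2 • v)))) '' B)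
      (hBf.image _) ?_
    intro x
    obtain ⟨p, hp, hx⟩ := hgB x
    refine ⟨_, ⟨p, hp, rfl⟩, ?_⟩
    rw [hh, hx]
    simp [add_smul]
  · refine hK.image h.symm ((fun p : (Pl →L[ℝ] ℝ) × ℝ => (AffineMap.id ℝ Pl +
      (((p.1 : Pl →ₗ[ℝ] ℝ).smulRight (-(1 + p.1 v)⁻¹ • v)).toAffineMap +
        AffineMap.const ℝ Pl (p.2 • (-(1 + p.1 v)⁻¹ • v))))) '' B)
      (hBf.image _) ?_
    intro z
    obtain ⟨x, rfl⟩ := h.surjective z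
    obtain ⟨p, hp, hx⟩ := hgB x
    refine ⟨_, ⟨p, hp, rfl⟩, ?_⟩
    have hpv : 1 + p.1 v ≠ 0 := by
      have := (hBn p hp v).trans_lt hv
      rw [abs_lt] at this
      linarith
    rw [Homeomorph.symm_apply_apply, hh, hx]
    simp only [AffineMap.coe_add, AffineMap.id_apply, Pi.add_apply, LinearMap.coe_toAffineMap, LinearMap.smulRight_apply,
      ContinuousLinearMap.coe_coe, map_add, map_smul, smul_smul, smul_eq_mul, AffineMap.const_apply,
      AffineMap.coe_const, Function.const_apply]
    rw [← add_smul, ← add_smul, add_assoc, ← add_smul]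
    have : (p.1 x + p.2) + (p.1 x * -(1 + p.1 v)⁻¹ + (p.1 x + p.2) * (p.1 v * -(1 + p.1 v)⁻¹)
      + p.2 * -(1 + p.1 v)⁻¹) = 0 := by
      field_simp; ring
    rw [this]; simp
  · rw [hh]
    have : g c = r := by simp [g, hr.le]
    rw [this]
    simp only [v, smul_smul, mul_inv_cancel₀ hr.ne', one_smul]
    abel
  · intro x hx
    have : g x = 0 := by
      simp only [g]
      apply max_eq_left
      rw [dist_eq_norm] at hx
      have := hsum (x - c)
      rw [map_sub, map_sub] at this
      by_contra hcon
      push Not at hcon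
      rw [lt_min_iff] at hcon
      linarith [hcon.1, hcon.2]
    rw [hh, this]; simp

lemma exists_trans {U : Set Pl} (hU : IsOpen U) (hc : IsPreconnected U) {x y : Pl} (hx : x ∈ U)
    (hy : y ∈ U) : ∃ h : Pl ≃ₜ Pl, PLH h ∧ h x = y ∧ ∀ z, z ∉ U → h z = z := by
  refine hc.induction₂ (fun x y => ∃ h : Pl ≃ₜ Pl, PLH h ∧ h x = y ∧ ∀ z, z ∉ U → h z = z)
    ?_ ?_ ?_ hx hy
  · intro x hx
    obtain ⟨ε, hε, hb⟩ := Metric.isOpen_iff.1 hU x hx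
    filter_upwards [mem_nhdsWithin_of_mem_nhds (Metric.ball_mem_nhds x (half_pos hε))] with y hy
    obtain ⟨h, h1, h2, h3⟩ := exists_move x y (ε / 2) (half_pos hε) hy
    refine ⟨h, h1, h2, fun z hz => h3 z ?_⟩
    by_contra hcon
    exact hz (hb (by rw [Metric.mem_ball]; linarith))
  · rintro x y z - - - ⟨h, h1, h2, h3⟩ ⟨g, g1, g2, g3⟩
    refine ⟨h.trans g, h1.trans g1, by simp [h2, g2], fun u hu => by simp [h3 u hu, g3 u hu]⟩
  · rintro x y - - ⟨h, h1, h2, h3⟩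
    refine ⟨h.symm, h1.symm, by simp [← h2], fun u hu => ?_⟩
    rw [Homeomorph.symm_apply_eq, h3 u hu]

lemma rank_Pl : 1 < Module.rank ℝ Pl := by
  rw [rank_eq_card_basis (EuclideanSpace.basisFun (Fin 2) ℝ).toBasis]; simp

lemma pathConn_ball_diff (z : Pl) {r : ℝ} (hr : 0 < r) : IsPathConnected (ball z r \ {z}) := by
  have h := (isPathConnected_compl_singleton_of_one_lt_rank rank_Pl (0 : Pl)).image
    (f := OpenPartialHomeomorph.univBall z r)
    (OpenPartialHomeomorph.continuous_univBall z r)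
  convert h using 1
  ext x
  constructor
  · rintro ⟨hx, hxz⟩
    have hx' : x ∈ (OpenPartialHomeomorph.univBall z r).target := by
      rwa [OpenPartialHomeomorph.univBall_target _ hr]
    refine ⟨(OpenPartialHomeomorph.univBall z r).symm x, ?_, OpenPartialHomeomorph.right_inv _ hx'⟩
    intro h0
    rw [mem_singleton_iff] at h0
    have := OpenPartialHomeomorph.right_inv _ hx'
    rw [h0, OpenPartialHomeomorph.univBall_apply_zero] at this
    exact hxz this.symm
  · rintro ⟨u, hu, rfl⟩
    have hs : ∀ t, t ∈ (OpenPartialHomeomorph.univBall z r).source := by simp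
    refine ⟨?_, ?_⟩
    · rw [← OpenPartialHomeomorph.univBall_target z hr]
      exact OpenPartialHomeomorph.map_source _ (hs u)
    · intro h
      rw [mem_singleton_iff] at h
      apply hu
      apply OpenPartialHomeomorph.injOn _ (hs u) (hs 0)
      rw [h, OpenPartialHomeomorph.univBall_apply_zero]

lemma pathConn_diff_single {U : Set Pl} (hU : IsOpen U) (hc : IsPathConnected U) (z : Pl) :
    IsPathConnected (U \ {z}) := by
  classical
  by_cases hz : z ∈ U
  swap
  · rwa [sdiff_singleton_eq_self hz]
  obtain ⟨ε, hε, hb⟩ := Metric.isOpen_iff.1 hU z hz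
  have hP := pathConn_ball_diff z hε
  have hPs : ball z ε \ {z} ⊆ U \ {z} := sdiff_subset_sdiff_left hb
  obtain ⟨q, hq⟩ := hP.nonempty
  let φ : Pl → Pl := fun x => if x = z then q else x
  have hφb : ∀ x ∈ ball z ε, φ x ∈ ball z ε \ {z} := by
    intro x hx
    by_cases hxz : x = z
    · simp only [φ, hxz, if_true]; exact hq
    · simp only [φ, hxz, if_false]; exact ⟨hx, hxz⟩
  rw [isPathConnected_iff]
  refine ⟨⟨q, hPs hq⟩, ?_⟩
  intro x hx y hy
  have key : JoinedIn (U \ {z}) (φ x) (φ y) := by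
    refine hc.isConnected.isPreconnected.induction₂ (fun x y => JoinedIn (U \ {z}) (φ x) (φ y))
      ?_ ?_ ?_ hx.1 hy.1
    · intro x hx
      by_cases hxz : x = z
      · filter_upwards [mem_nhdsWithin_of_mem_nhds (Metric.ball_mem_nhds x hε)] with y' hy'
        subst hxz
        exact (hP.joinedIn _ (hφb x (mem_ball_self hε)) _ (hφb y' hy')).mono hPs
      · have hop : IsOpen (U \ {z}) := hU.sdiff isClosed_singleton
        obtain ⟨δ, hδ, hbδ⟩ := Metric.isOpen_iff.1 hop x ⟨hx, hxz⟩
        filter_upwards [mem_nhdsWithin_of_mem_nhds (Metric.ball_mem_nhds x hδ)] with y hy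
        have hyz : y ≠ z := (hbδ hy).2
        simp only [φ, hxz, hyz, if_false]
        exact ((isPathConnected_ball hδ).joinedIn _ (mem_ball_self hδ) _ hy).mono hbδ
    · intro x y z _ _ _ h1 h2; exact h1.trans h2
    · intro x y _ _ h; exact h.symm
  simpa only [φ, show x ≠ z from hx.2, show y ≠ z from hy.2, if_false] using key

lemma pathConn_diff_finite {U : Set Pl} (hU : IsOpen U) (hc : IsPathConnected U) {F : Set Pl}
    (hF : F.Finite) : IsPathConnected (U \ F) := by
  induction F, hF using Set.Finite.induction_on with
  | empty => simpa using hc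
  | @insert a s _ hs ih =>
    have : U \ insert a s = (U \ s) \ {a} := by
      ext x; simp only [mem_sdiff, mem_insert_iff, mem_singleton_iff]; tauto
    rw [this]
    exact pathConn_diff_single (hU.sdiff hs.isClosed) ih a

lemma exists_multi {U : Set Pl} (hU : IsOpen U) (hc : IsPathConnected U) {ι : Type*}
    (s : Finset ι) (p q : ι → Pl) (hp : ∀ i ∈ s, p i ∈ U) (hq : ∀ i ∈ s, q i ∈ U)
    (hpi : Set.InjOn p s) (hqi : Set.InjOn q s) :
    ∃ h : Pl ≃ₜ Pl, PLH h ∧ (∀ i ∈ s, h (p i) = q i) ∧ ∀ z, z ∉ U → h z = z := by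
  classical
  induction s using Finset.induction_on with
  | empty => exact ⟨Homeomorph.refl _, PLH.refl, by simp, by simp⟩
  | @insert a s ha ih =>
    obtain ⟨h, h1, h2, h3⟩ := ih (fun i hi => hp i (Finset.mem_insert_of_mem hi))
      (fun i hi => hq i (Finset.mem_insert_of_mem hi)) (hpi.mono (by simp)) (hqi.mono (by simp))
    have hfin : (q '' (s : Set ι)).Finite := s.finite_toSet.image q
    have hUa := Finset.mem_insert_self a s
    have hmapU : ∀ x ∈ U, h x ∈ U := by
      intro x hx
      by_contra hcon
      have := h3 _ hcon
      have := h.injective this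
      exact hcon (by rw [this]; exact hx)
    obtain ⟨g, g1, g2, g3⟩ := exists_trans (U := U \ q '' (s : Set ι)) (hU.sdiff hfin.isClosed)
      (pathConn_diff_finite hU hc hfin).isConnected.isPreconnected (x := h (p a)) (y := q a)
      (by
        refine ⟨hmapU _ (hp a hUa), ?_⟩
        rintro ⟨i, hi, hqi'⟩
        rw [← h2 i hi] at hqi'
        have := hpi (by simp [Finset.mem_coe.1 hi]) (by simp) (h.injective hqi')
        exact ha (this ▸ hi))
      (by
        refine ⟨hq a hUa, ?_⟩
        rintro ⟨i, hi, hqi'⟩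
        have := hqi (by simp [Finset.mem_coe.1 hi]) (by simp) hqi'
        exact ha (this ▸ hi))
    refine ⟨h.trans g, h1.trans g1, ?_, ?_⟩
    · intro i hi
      rw [Finset.mem_insert] at hi
      rcases hi with rfl | hi
      · exact g2
      · rw [Homeomorph.trans_apply, h2 i hi]
        exact g3 _ (fun hcon => hcon.2 ⟨i, hi, rfl⟩)
    · intro z hz
      rw [Homeomorph.trans_apply, h3 z hz]
      exact g3 _ (fun hcon => hz hcon.1)

end PartPC

section PartPD

open Set Metric Topology

/-- `S` is an arc with end points `x`, `y` -/
def IsArc (S : Set Pl) (x y : Pl) : Prop :=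
  ∃ γ : Path x y, Function.Injective γ ∧ Set.range γ = S

lemma IsArc.of_fun {f : ℝ → Pl} {a b : ℝ} (hab : a < b) (hf : ContinuousOn f (Icc a b))
    (hi : InjOn f (Icc a b)) : IsArc (f '' Icc a b) (f a) (f b) := by
  have hmem : ∀ t : unitInterval, a + t * (b - a) ∈ Icc a b := by
    intro t
    have h0 := t.2.1
    have h1 := t.2.2
    constructor <;> nlinarith
  let γ : Path (f a) (f b) :=
    { toFun := fun t => f (a + t * (b - a))
      continuous_toFun := by
        refine hf.comp_continuous (by fun_prop) hmem
      source' := by simp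
      target' := by simp }
  have hγ : ∀ t, γ t = f (a + t * (b - a)) := fun t => rfl
  refine ⟨γ, ?_, ?_⟩
  · intro t u htu
    rw [hγ, hγ] at htu
    have := hi (hmem t) (hmem u) htu
    have h2 : (t : ℝ) * (b - a) = u * (b - a) := by linarith
    exact Subtype.ext (mul_right_cancel₀ (sub_ne_zero.2 hab.ne') h2)
  · ext x
    constructor
    · rintro ⟨t, rfl⟩; exact ⟨_, hmem t, rfl⟩
    · rintro ⟨u, hu, rfl⟩
      refine ⟨⟨(u - a) / (b - a), ?_, ?_⟩, ?_⟩
      · exact div_nonneg (by linarith [hu.1]) (by linarith)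
      · rw [div_le_one (by linarith)]; linarith [hu.2]
      · rw [hγ]; congr 1
        have : b - a ≠ 0 := sub_ne_zero.2 hab.ne'
        field_simp
        ring

lemma homeo_id_off {U : Set Pl} {h : Pl ≃ₜ Pl} (hh : ∀ z, z ∉ U → h z = z) (x : Pl) (hx : x ∈ U) :
    h.symm x ∈ U := by
  by_contra hcon
  have := hh _ hcon
  rw [Homeomorph.apply_symm_apply] at this
  exact hcon (this ▸ hx)

lemma line_inter_subsingleton (P D Q : Pl) (δ s : ℝ)
    (hD : (D 0 = 0 ∧ D 1 = 0) ∨ D 1 ≠ s * D 0) :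
    {x : Pl | (∃ t : ℝ, x = P + t • D) ∧ ∃ u : ℝ, x = Q + u • (δ • !₂[1, s])}.Subsingleton := by
  rintro x ⟨⟨t, ht⟩, u, hu⟩ y ⟨⟨t', ht'⟩, u', hu'⟩
  have e0 : ∀ (t : ℝ) (P D : Pl) (i : Fin 2), (P + t • D) i = P i + t * D i := by intros; simp
  rcases hD with ⟨h0, h1⟩ | hD
  · rw [ht, ht']
    ext i
    rw [e0, e0]
    fin_cases i
    · simp [h0]
    · simp [h1]
  · have a0 : P 0 + t * D 0 = Q 0 + u * δ := by
      have := congrArg (fun v : Pl => v 0) (ht.symm.trans hu); simpa using this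
    have a1 : P 1 + t * D 1 = Q 1 + u * (δ * s) := by
      have := congrArg (fun v : Pl => v 1) (ht.symm.trans hu); simpa using this
    have b0 : P 0 + t' * D 0 = Q 0 + u' * δ := by
      have := congrArg (fun v : Pl => v 0) (ht'.symm.trans hu'); simpa using this
    have b1 : P 1 + t' * D 1 = Q 1 + u' * (δ * s) := by
      have := congrArg (fun v : Pl => v 1) (ht'.symm.trans hu'); simpa using this
    have : (t - t') * (D 1 - s * D 0) = 0 := by linear_combination a1 - b1 - s * (a0 - b0)
    rcases mul_eq_zero.1 this with h | h
    · rw [ht, ht', sub_eq_zero.1 h]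
    · exact absurd (sub_eq_zero.1 h) hD

theorem exists_chain {U : Set Pl} (hU : IsOpen U) (hUc : IsPathConnected U) (m : ℕ) (c : ℕ → Pl)
    (hc : ∀ i < m, c i ∈ U) (hinj : ∀ i < m, ∀ j < m, c i = c j → i = j) {K : Set Pl} (hK : Thin K) :
    ∃ S : ℕ → Set Pl, (∀ i, i + 1 < m → IsArc (S i) (c i) (c (i + 1)) ∧ S i ⊆ U ∧ Thin (S i) ∧
      (S i ∩ K).Finite ∧ ∀ j < m, c j ∈ S i → j = i ∨ j = i + 1) ∧
      ∀ i j, i < j → j + 1 < m → ∀ x, x ∈ S i → x ∈ S j → ∃ l < m, x = c l := by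
  obtain ⟨z, hz⟩ := hUc.nonempty
  obtain ⟨ε, hε, hb⟩ := Metric.isOpen_iff.1 hU z hz
  obtain ⟨δ, hδ, hδε⟩ : ∃ δ > 0, δ * (m + 1) < ε := by
    refine ⟨ε / (m + 2), by positivity, ?_⟩
    rw [div_mul_eq_mul_div, div_lt_iff₀ (by positivity)]
    nlinarith
  let P : ℝ → ℕ → ℝ → Pl := fun s i t => z + δ • !₂[(i : ℝ) + t, s * min t (1 - t)]
  have hP0 : ∀ s i t, P s i t 0 = z 0 + δ * (i + t) := by intros; simp [P]
  have hP1 : ∀ s i t, P s i t 1 = z 1 + δ * (s * min t (1 - t)) := by intros; simp [P]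
  have hPU : ∀ s, 0 < s → s < 1 → ∀ i < m, ∀ t ∈ Icc (0 : ℝ) 1, (i + 1 < m ∨ t = 0) → P s i t ∈ U := by
    intro s hs0 hs1 i hi t ht hit
    apply hb
    rw [Metric.mem_ball, dist_eq_norm]
    have : P s i t - z = δ • !₂[(i : ℝ) + t, s * min t (1 - t)] := by simp [P]
    rw [this, norm_smul, Real.norm_eq_abs, abs_of_pos hδ]
    refine lt_of_le_of_lt (mul_le_mul_of_nonneg_left ?_ hδ.le) hδε
    rw [EuclideanSpace.norm_eq]
    simp only [Fin.sum_univ_two, Real.norm_eq_abs, sq_abs]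
    rw [Real.sqrt_le_left (by positivity)]
    simp only [PiLp.toLp_apply, Matrix.cons_val_zero, Matrix.cons_val_one]
    have h1 : (i : ℝ) + t ≤ m := by
      have : (i : ℝ) + 1 ≤ m := by exact_mod_cast hi
      linarith [ht.2]
    have h2 : 0 ≤ min t (1 - t) := le_min ht.1 (by linarith [ht.2])
    have h3 : min t (1 - t) ≤ 1 := (min_le_left _ _).trans ht.2
    have h4 : 0 ≤ (i : ℝ) + t := by have := ht.1; positivity
    have h5 : s * min t (1 - t) ≤ 1 := by nlinarith
    have h6 : 0 ≤ s * min t (1 - t) := by positivity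
    nlinarith
  have hq0 : ∀ s i, P s i 0 = P (1 / 2) i 0 := by intro s i; simp [P]
  obtain ⟨h, h1, h2, h3⟩ := exists_multi hU hUc (Finset.range m) c (fun i => P (1 / 2) i 0)
    (fun i hi => hc i (Finset.mem_range.1 hi))
    (fun i hi => hPU _ (by norm_num) (by norm_num) i (Finset.mem_range.1 hi) 0 (by simp) (Or.inr rfl))
    (fun i hi j hj hij => hinj i (by simpa using hi) j (by simpa using hj) hij)
    (fun i hi j hj hij => by
      have := congrArg (fun v : Pl => v 0) hij
      simp only [hP0] at this
      have := mul_left_cancel₀ hδ.ne' (add_left_cancel this)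
      exact_mod_cast add_right_cancel this)
  obtain ⟨F, hF, hFK⟩ := h1.1 K hK
  obtain ⟨s, hs, hsF⟩ : ∃ s ∈ Ioo (0 : ℝ) 1,
      s ∉ (fun l : Pl × Pl => l.2 1 / l.2 0) '' F ∪ (fun l : Pl × Pl => -(l.2 1 / l.2 0)) '' F :=
    (Ioo_infinite zero_lt_one).exists_notMem_finite ((hF.image _).union (hF.image _))
  have hgood : ∀ l ∈ F, ((l.2 0 = 0 ∧ l.2 1 = 0) ∨ l.2 1 ≠ s * l.2 0) ∧
      ((l.2 0 = 0 ∧ l.2 1 = 0) ∨ l.2 1 ≠ (-s) * l.2 0) := by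
    intro l hl
    by_cases h0 : l.2 0 = 0
    · rw [h0]; simp only [mul_zero, true_and, ne_eq]
      exact ⟨em _, em _⟩
    · refine ⟨Or.inr fun hcon => hsF (Or.inl ⟨l, hl, ?_⟩), Or.inr fun hcon => hsF (Or.inr ⟨l, hl, ?_⟩)⟩
      · change l.2 1 / l.2 0 = s
        rw [hcon]; field_simp
      · change -(l.2 1 / l.2 0) = s
        rw [hcon]; field_simp
  have hline : ∀ i t, (∃ u : ℝ, P s i t = P s i 0 + u • (δ • !₂[1, s])) ∨
      (∃ u : ℝ, P s i t = (z + δ • !₂[(i : ℝ), s]) + u • (δ • !₂[1, -s])) := by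
    intro i t
    rcases le_total t (1 - t) with ht | ht
    · left; refine ⟨t, ?_⟩
      ext j
      fin_cases j
      · simp [P]; ring
      · simp [P, ht]; ring
    · right; refine ⟨t, ?_⟩
      ext j
      fin_cases j
      · simp [P]; ring
      · simp [P, ht]; ring
  have hq1 : ∀ i, P s i 1 = P s (i + 1) 0 := by intro i; simp [P]
  have hci : ∀ i < m, h.symm (P s i 0) = c i := by
    intro i hi
    rw [hq0, ← h2 i (Finset.mem_range.2 hi), Homeomorph.symm_apply_apply]
  have hPc : ∀ i, Continuous (P s i) := by
    intro i
    have : P s i = fun t => z + δ • (((i : ℝ) + t) • !₂[1, 0] + (s * min t (1 - t)) • !₂[0, 1]) := by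
      funext t
      ext j
      fin_cases j <;> simp [P]
    rw [this]; fun_prop
  refine ⟨fun i => (fun t => h.symm (P s i t)) '' Icc 0 1, ?_, ?_⟩
  · intro i hi
    refine ⟨?_, ?_, ?_, ?_, ?_⟩
    · have := IsArc.of_fun (f := fun t => h.symm (P s i t)) (zero_lt_one)
        (h.symm.continuous.comp (hPc i)).continuousOn (by
          intro t _ u _ htu
          have := congrArg (fun v : Pl => v 0) (h.symm.injective htu)
          simp only [hP0] at this
          have := mul_left_cancel₀ hδ.ne' (add_left_cancel this)
          exact add_left_cancel this)
      rwa [hq1, hci i (by omega), hci (i + 1) hi] at this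
    · rintro _ ⟨t, ht, rfl⟩
      exact homeo_id_off h3 _ (hPU s hs.1 hs.2 i (by omega) t ht (Or.inl hi))
    · have : (fun t => h.symm (P s i t)) '' Icc 0 1 = h.symm '' (P s i '' Icc 0 1) := by
        rw [← Set.image_comp]; rfl
      change Thin ((fun t => h.symm (P s i t)) '' Icc 0 1)
      rw [this]
      apply h1.2
      refine ⟨{(P s i 0, δ • !₂[1, s]), (z + δ • !₂[(i : ℝ), s], δ • !₂[1, -s])}, by simp, ?_⟩
      rintro _ ⟨t, ht, rfl⟩
      rcases hline i t with hl | hl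
      · exact ⟨_, Or.inl rfl, hl⟩
      · exact ⟨_, Or.inr rfl, hl⟩
    · have hfin : (⋃ l ∈ F, ({x : Pl | (∃ t : ℝ, x = l.1 + t • l.2) ∧
            ∃ u : ℝ, x = P s i 0 + u • (δ • !₂[1, s])} ∪ {x : Pl | (∃ t : ℝ, x = l.1 + t • l.2) ∧
            ∃ u : ℝ, x = (z + δ • !₂[(i : ℝ), s]) + u • (δ • !₂[1, -s])})).Finite := by
        refine hF.biUnion fun l hl => Set.Finite.union ?_ ?_
        · exact (line_inter_subsingleton _ _ _ _ _ (hgood l hl).1).finite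
        · exact (line_inter_subsingleton _ _ _ _ _ (hgood l hl).2).finite
      refine (hfin.image h.symm).subset ?_
      rintro _ ⟨⟨t, ht, rfl⟩, hk⟩
      refine ⟨P s i t, ?_, rfl⟩
      obtain ⟨l, hl, u, hu⟩ := hFK (P s i t) ⟨_, hk, by simp⟩
      simp only [mem_iUnion]
      refine ⟨l, hl, ?_⟩
      rcases hline i t with hl | hl
      · exact Or.inl ⟨⟨u, hu⟩, hl⟩
      · exact Or.inr ⟨⟨u, hu⟩, hl⟩
    · rintro j hj ⟨t, ht, htj⟩
      rw [← hci j hj] at htj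
      have htj := h.symm.injective htj
      have e0 := congrArg (fun v : Pl => v 0) htj
      have e1 := congrArg (fun v : Pl => v 1) htj
      simp only [hP0, hP1] at e0 e1
      have e0 := mul_left_cancel₀ hδ.ne' (add_left_cancel e0)
      have e1 := mul_left_cancel₀ hs.1.ne' (mul_left_cancel₀ hδ.ne' (add_left_cancel e1))
      simp only [sub_zero, zero_le_one, min_eq_left, add_zero] at e0 e1
      rcases min_choice t (1 - t) with h' | h' <;> rw [h'] at e1
      · left; rw [e1] at e0; simp at e0; exact e0.symm
      · right
        have : t = 1 := by linarith
        rw [this] at e0; exact_mod_cast e0.symm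
  · rintro i j hij hj _ ⟨t, ht, rfl⟩ ⟨u, hu, htu⟩
    have e0 := congrArg (fun v : Pl => v 0) (h.symm.injective htu)
    simp only [hP0] at e0
    have e0 := mul_left_cancel₀ hδ.ne' (add_left_cancel e0)
    have hij' : (i : ℝ) + 1 ≤ j := by exact_mod_cast hij
    have hu0 : u = 0 := by linarith [ht.2, hu.1]
    refine ⟨j, by omega, ?_⟩
    rw [← hci j (by omega), ← hu0]
    exact htu.symm

end PartPD

section PartPE

open Set Metric Topology

lemma exists_disc {C : Set Pl} (hC : IsOpen C) (hCc : IsPathConnected C) {v : Pl} (hv : v ∈ C)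
    {X Z : Set Pl} (hX : X.Finite) (hZ : Z.Finite) (hXC : X ⊆ C) (hXZ : Disjoint X Z) (hvZ : v ∉ Z) :
    ∃ (h : Pl ≃ₜ Pl) (r : ℝ), 0 < r ∧ h v = v ∧ (∀ x ∈ X, dist (h x) v < r) ∧
      ∀ x, dist (h x) v ≤ r → x ∈ C ∧ x ∉ Z := by
  classical
  have hU : IsOpen (C \ Z) := hC.sdiff hZ.isClosed
  have hUc : IsPathConnected (C \ Z) := pathConn_diff_finite hC hCc hZ
  obtain ⟨ε, hε, hb⟩ := Metric.isOpen_iff.1 hU v ⟨hv, hvZ⟩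
  have hinf : (ball v (ε / 2) \ {v}).Infinite := by
    refine Set.Infinite.sdiff ?_ (finite_singleton v)
    intro hfin
    have hcount := (isConnected_ball (x := v) (half_pos hε)).isPreconnected.infinite_of_nontrivial
    refine hcount ?_ hfin
    refine ⟨v, mem_ball_self (half_pos hε), v + (ε / 4) • EuclideanSpace.single 0 1, ?_, ?_⟩
    · rw [mem_ball, dist_eq_norm]
      simp [norm_smul, abs_of_pos hε]; linarith
    · simp [hε.ne']
  obtain ⟨idx, hidx⟩ := Set.countable_iff_exists_injOn.1 hX.countable
  let f := hinf.natEmbedding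
  let q : Pl → Pl := fun x => if x = v then v else f (idx x)
  have hqb : ∀ x, q x ∈ ball v (ε / 2) := by
    intro x
    by_cases hx : x = v
    · simp [q, hx, hε]
    · simp only [q, hx, if_false]; exact (f (idx x)).2.1
  have hqU : ∀ x, q x ∈ C \ Z := fun x => hb (ball_subset_ball (by linarith) (hqb x))
  obtain ⟨h, -, h2, h3⟩ := exists_multi hU hUc (insert v hX.toFinset) id q
    (by
      intro x hx
      rw [Finset.mem_insert, Set.Finite.mem_toFinset] at hx
      rcases hx with rfl | hx
      · exact ⟨hv, hvZ⟩
      · exact ⟨hXC hx, Set.disjoint_left.1 hXZ hx⟩)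
    (fun x _ => hqU x) Function.injective_id.injOn
    (by
      intro x hx y hy hxy
      simp only [Finset.coe_insert, Set.Finite.coe_toFinset, mem_insert_iff] at hx hy
      by_cases hxv : x = v <;> by_cases hyv : y = v
      · rw [hxv, hyv]
      · simp only [q, hxv, hyv, if_true, if_false] at hxy
        exact absurd hxy.symm (f (idx y)).2.2
      · simp only [q, hxv, hyv, if_true, if_false] at hxy
        exact absurd hxy (f (idx x)).2.2
      · simp only [q, hxv, hyv, if_false] at hxy
        exact hidx (hx.resolve_left hxv) (hy.resolve_left hyv) (f.injective (Subtype.ext hxy)))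
  refine ⟨h, ε / 2, half_pos hε, ?_, ?_, ?_⟩
  · have := h2 v (by simp)
    simpa [q] using this
  · intro x hx
    have := h2 x (by simp [hx])
    rw [id] at this
    rw [this]; exact hqb x
  · intro x hx
    have := homeo_id_off h3 (h x) (hb (by rw [mem_ball]; linarith))
    rwa [Homeomorph.symm_apply_apply] at this

/-- the radial arc from `x` to the centre `c` in the disc picture `h` -/
def radArc (h : Pl ≃ₜ Pl) (c x : Pl) : Set Pl :=
  (fun u : ℝ => h.symm (AffineMap.lineMap (h x) c u)) '' Icc 0 1

lemma dist_lineMap (a c : Pl) {u : ℝ} (hu : u ≤ 1) :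
    dist (AffineMap.lineMap a c u) c = (1 - u) * dist a c := by
  rw [dist_lineMap_right, Real.norm_eq_abs, abs_of_nonneg (by linarith)]

lemma radArc_dist {h : Pl ≃ₜ Pl} {c x y : Pl} (hy : y ∈ radArc h c x) :
    dist (h y) c ≤ dist (h x) c ∧ (dist (h y) c = dist (h x) c → dist (h x) c ≠ 0 → y = x) := by
  obtain ⟨u, hu, rfl⟩ := hy
  simp only [Homeomorph.apply_symm_apply]
  rw [dist_lineMap _ _ hu.2]
  refine ⟨by nlinarith [hu.1, hu.2, dist_nonneg (x := h x) (y := c)], ?_⟩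
  intro h1 h2
  have : u = 0 := by
    have : (1 - u) * dist (h x) c = 1 * dist (h x) c := by rw [h1, one_mul]
    have := mul_right_cancel₀ h2 this
    linarith
  rw [this]; simp

lemma radArc_inter {h : Pl ≃ₜ Pl} {c x x' y : Pl} {r : ℝ} (hr : 0 < r) (hx : dist (h x) c = r)
    (hx' : dist (h x') c = r) (hne : x ≠ x') (hy : y ∈ radArc h c x) (hy' : y ∈ radArc h c x') :
    h y = c := by
  obtain ⟨u, hu, rfl⟩ := hy
  obtain ⟨u', hu', heq⟩ := hy'
  have heq := h.symm.injective heq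
  have hd := congrArg (fun z => dist z c) heq
  simp only [dist_lineMap _ _ hu.2, dist_lineMap _ _ hu'.2, hx, hx'] at hd
  have huu : u' = u := by
    have := mul_right_cancel₀ hr.ne' hd
    linarith
  subst huu
  rw [Homeomorph.apply_symm_apply]
  by_cases h1 : u' = 1
  · rw [h1]; simp
  · exfalso
    apply hne
    apply h.injective
    rw [AffineMap.lineMap_apply, AffineMap.lineMap_apply] at heq
    simp only [vsub_eq_sub, vadd_eq_add, smul_sub] at heq
    have h2 : (1 - u') • h x' = (1 - u') • h x := by
      rw [sub_smul, sub_smul, one_smul, one_smul]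
      have := congrArg (fun z => z - u' • c) heq
      calc h x' - u' • h x' = u' • c - u' • h x' + h x' - u' • c := by abel
        _ = _ := by rw [this]; abel
    exact (smul_right_injective Pl (sub_ne_zero.2 (Ne.symm h1)) h2).symm

/-- one side of the cutting lemma -/
def GoodCut (h : Pl ≃ₜ Pl) (c : Pl) (r : ℝ) (S O : Set Pl) (x a : Pl) : Prop :=
  O ⊆ S ∧ a ∈ O ∧ x ∈ O ∧ dist (h x) c = r ∧ (∀ y ∈ O, dist (h y) c ≤ r → y = x) ∧
    IsArc (O ∪ radArc h c x) a (h.symm c)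

lemma goodCut_of {h : Pl ≃ₜ Pl} {c : Pl} {r : ℝ} (hr : 0 < r) {f : ℝ → Pl} (hf : Continuous f) {t : ℝ}
    (ht : 0 < t) (hi : InjOn f (Icc 0 t)) (hft : dist (h (f t)) c = r)
    (hlt : ∀ u ∈ Ico 0 t, r < dist (h (f u)) c) {S : Set Pl} (hS : f '' Icc 0 t ⊆ S) :
    GoodCut h c r S (f '' Icc 0 t) (f t) (f 0) := by
  refine ⟨hS, ⟨0, ⟨le_rfl, ht.le⟩, rfl⟩, ⟨t, ⟨ht.le, le_rfl⟩, rfl⟩, hft, ?_, ?_⟩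
  · rintro _ ⟨u, hu, rfl⟩ hd
    rcases hu.2.lt_or_eq with h1 | h1
    · exact absurd (hlt u ⟨hu.1, h1⟩) (not_lt.2 hd)
    · rw [h1]
  · let g : ℝ → Pl := fun u => if u ≤ t then f u else
      h.symm (AffineMap.lineMap (h (f t)) c (u - t))
    have hg : Continuous g := by
      refine Continuous.if_le hf ?_ continuous_id continuous_const ?_
      · exact h.symm.continuous.comp (AffineMap.lineMap_continuous.comp (by fun_prop))
      · intro u hu
        simp [hu]
    have hg1 : ∀ u, u ≤ t → g u = f u := fun u hu => if_pos hu
    have hg2 : ∀ u, t ≤ u → g u = h.symm (AffineMap.lineMap (h (f t)) c (u - t)) := by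
      intro u hu
      rcases hu.lt_or_eq with h1 | h1
      · exact if_neg (not_le.2 h1)
      · rw [hg1 u h1.ge, h1]; simp
    have hd2 : ∀ u, t ≤ u → u ≤ t + 1 → dist (h (g u)) c = (1 - (u - t)) * r := by
      intro u h1 h2
      rw [hg2 u h1, Homeomorph.apply_symm_apply, dist_lineMap _ _ (by linarith), hft]
    have hinj : InjOn g (Icc 0 (t + 1)) := by
      have key : ∀ u ∈ Icc 0 (t + 1), ∀ u' ∈ Icc 0 (t + 1), u < u' → g u ≠ g u' := by
        intro u hu u' hu' huu heq
        rcases le_total u' t with h1 | h1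
        · rw [hg1 u (by linarith), hg1 u' h1] at heq
          exact huu.ne (hi ⟨hu.1, by linarith⟩ ⟨hu'.1, h1⟩ heq)
        · have e := hd2 u' h1 hu'.2
          rw [← heq] at e
          rcases lt_or_ge u t with h2 | h2
          · rw [hg1 u h2.le] at e
            have := hlt u ⟨hu.1, h2⟩
            nlinarith
          · rw [hd2 u h2 hu.2] at e
            have := mul_right_cancel₀ hr.ne' e
            linarith
      intro u hu u' hu' heq
      rcases lt_trichotomy u u' with h1 | h1 | h1
      · exact absurd heq (key u hu u' hu' h1)
      · exact h1
      · exact absurd heq.symm (key u' hu' u hu h1)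
    have := IsArc.of_fun (by linarith : 0 < t + 1) hg.continuousOn hinj
    rw [hg1 0 ht.le, hg2 (t + 1) (by linarith)] at this
    convert this using 1
    · ext y
      constructor
      · rintro (⟨u, hu, rfl⟩ | ⟨u, hu, rfl⟩)
        · exact ⟨u, ⟨hu.1, by linarith [hu.2]⟩, hg1 u hu.2⟩
        · refine ⟨u + t, ⟨by linarith [hu.1], by linarith [hu.2]⟩, ?_⟩
          rw [hg2 _ (by linarith [hu.1])]; simp
      · rintro ⟨u, hu, rfl⟩
        rcases le_total u t with h1 | h1
        · left; exact ⟨u, ⟨hu.1, h1⟩, (hg1 u h1).symm⟩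
        · right; exact ⟨u - t, ⟨by linarith, by linarith [hu.2]⟩, (hg2 u h1).symm⟩
    · simp

/-- first hitting time -/
lemma first_hit {g : ℝ → ℝ} (hg : Continuous g) {r : ℝ} {t1 : ℝ} (ht1 : 0 ≤ t1) (h0 : r < g 0)
    (h1 : g t1 < r) : ∃ t, 0 < t ∧ t < t1 ∧ g t = r ∧ ∀ u ∈ Ico 0 t, r < g u := by
  have hcl : IsCompact (Icc 0 t1 ∩ g ⁻¹' Iic r) := isCompact_Icc.inter_right (isClosed_Iic.preimage hg)
  obtain ⟨t, ht, hmin⟩ := hcl.exists_isLeast ⟨t1, ⟨ht1, le_rfl⟩, h1.le⟩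
  have ht0 : t ≠ 0 := by rintro rfl; exact absurd ht.2 (not_le.2 h0)
  have htpos : 0 < t := lt_of_le_of_ne ht.1.1 ht0.symm
  have hlt : ∀ u ∈ Ico 0 t, r < g u := by
    intro u hu
    by_contra hcon
    have := hmin ⟨⟨hu.1, hu.2.le.trans ht.1.2⟩, not_lt.1 hcon⟩
    linarith [hu.2]
  have hge : r ≤ g t := by
    have hc : t ∈ closure (Ico 0 t) := by
      rw [closure_Ico ht0.symm]; exact ⟨htpos.le, le_rfl⟩
    exact closure_minimal (fun u hu => (hlt u hu).le) (isClosed_Ici.preimage hg) hc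
  have heq : g t = r := le_antisymm ht.2 hge
  refine ⟨t, htpos, lt_of_le_of_ne ht.1.2 ?_, heq, hlt⟩
  rintro rfl
  linarith

lemma exists_cut {h : Pl ≃ₜ Pl} {c : Pl} {r : ℝ} (hr : 0 < r) {S : Set Pl} {a b : Pl}
    (hS : IsArc S a b) (hm : ∃ y ∈ S, dist (h y) c < r) :
    ∃ (O : Bool → Set Pl) (x : Bool → Pl),
      (r < dist (h a) c → GoodCut h c r S (O true) (x true) a) ∧
      (r < dist (h b) c → GoodCut h c r S (O false) (x false) b) ∧
      (r < dist (h a) c → r < dist (h b) c → Disjoint (O true) (O false)) := by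
  obtain ⟨γ, hγ, rfl⟩ := hS
  obtain ⟨_, ⟨⟨t0, ht0⟩, rfl⟩, hy⟩ := hm
  let f : ℝ → Pl := γ.extend
  have hf : Continuous f := γ.continuous_extend
  have hfe : ∀ u (hu : u ∈ Icc (0 : ℝ) 1), f u = γ ⟨u, hu⟩ := fun u hu => γ.extend_apply hu
  have hfi : InjOn f (Icc 0 1) := by
    intro u hu u' hu' heq
    rw [hfe u hu, hfe u' hu'] at heq
    exact congrArg Subtype.val (hγ heq)
  have hfr : ∀ u ∈ Icc (0 : ℝ) 1, f u ∈ range γ := fun u hu => ⟨_, (hfe u hu).symm⟩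
  have hf0 : f 0 = a := by simp [f]
  have hf1 : f 1 = b := by simp [f]
  rw [← hfe] at hy
  have hA : ∃ (t : ℝ), r < dist (h a) c → (0 < t ∧ t < t0 ∧ GoodCut h c r (range γ) (f '' Icc 0 t) (f t) a) := by
    by_cases ha : r < dist (h a) c
    · obtain ⟨t, h1, h2, h3, h4⟩ := first_hit (g := fun u => dist (h (f u)) c) (by fun_prop) ht0.1
        (by rw [hf0]; exact ha) hy
      refine ⟨t, fun _ => ⟨h1, h2, ?_⟩⟩
      have hsub : Icc 0 t ⊆ Icc 0 1 := Icc_subset_Icc le_rfl (by linarith [ht0.2])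
      have := goodCut_of (h := h) (c := c) hr hf h1 (hfi.mono hsub) h3 h4 (S := range γ)
        (by rintro _ ⟨u, hu, rfl⟩; exact hfr u (hsub hu))
      rwa [hf0] at this
    · exact ⟨0, fun h' => absurd h' ha⟩
  have hB : ∃ (t : ℝ), r < dist (h b) c → (t0 < 1 - t ∧ 0 < t ∧
      GoodCut h c r (range γ) ((fun u => f (1 - u)) '' Icc 0 t) (f (1 - t)) b) := by
    by_cases ha : r < dist (h b) c
    · obtain ⟨t, h1, h2, h3, h4⟩ := first_hit (g := fun u => dist (h (f (1 - u))) c) (by fun_prop)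
        (t1 := 1 - t0) (by linarith [ht0.2]) (by simpa [hf1] using ha) (by simpa using hy)
      refine ⟨t, fun _ => ⟨by linarith, h1, ?_⟩⟩
      have hsub : ∀ u ∈ Icc 0 t, 1 - u ∈ Icc (0 : ℝ) 1 := by
        intro u hu; constructor <;> linarith [hu.1, hu.2, ht0.1]
      have := goodCut_of (h := h) (c := c) hr (f := fun u => f (1 - u)) (by fun_prop) h1 (by
        intro u hu u' hu' heq
        have := hfi (hsub u hu) (hsub u' hu') heq
        linarith) h3 h4 (S := range γ)
        (by rintro _ ⟨u, hu, rfl⟩; exact hfr _ (hsub u hu))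
      simpa [hf1] using this
    · exact ⟨0, fun h' => absurd h' ha⟩
  obtain ⟨t, ht⟩ := hA
  obtain ⟨u, hu⟩ := hB
  refine ⟨fun o => if o then f '' Icc 0 t else (fun u => f (1 - u)) '' Icc 0 u,
    fun o => if o then f t else f (1 - u), ?_, ?_, ?_⟩
  · intro ha; simpa using (ht ha).2.2
  · intro hb; simpa using (hu hb).2.2
  · intro ha hb
    have h1 := ht ha
    have h2 := hu hb
    simp only [if_true, Bool.false_eq_true, if_false]
    rw [Set.disjoint_left]
    rintro _ ⟨s, hs, rfl⟩ ⟨s', hs', heq⟩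
    have := hfi (x₁ := 1 - s') (x₂ := s) ⟨by linarith [hs'.2, ht0.1], by linarith [hs'.1]⟩
      ⟨hs.1, by linarith [hs.2, ht0.2]⟩ heq
    linarith [hs.2, hs'.2]

end PartPE

section PartPF

open Set Metric Topology

/-- a labelled family of arcs whose crossings lie in `Z` -/
def HasDrawing {V L : Type} (w : V → Pl) (Reg : L → Set Pl) (R : L → V → V → Prop) (Z : Set Pl) : Prop :=
  ∃ (ι : Type) (lab : ι → L) (s t : ι → V) (S : ι → Set Pl),
    (∀ i, s i ≠ t i ∧ IsArc (S i) (w (s i)) (w (t i)) ∧ S i ⊆ Reg (lab i) ∧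
      ∀ v, w v ∈ S i → v = s i ∨ v = t i) ∧
    (∀ i j, i ≠ j → ∀ x ∈ S i, x ∈ S j → x ∈ range w ∨ x ∈ Z) ∧
    ∀ l p q, R l p q → Relation.EqvGen (fun p q => ∃ i, lab i = l ∧ s i = p ∧ t i = q) p q

lemma eqvGen_trans_of {α : Type*} {r r' : α → α → Prop}
    (h : ∀ a b, r a b → Relation.EqvGen r' a b) {a b : α} (hab : Relation.EqvGen r a b) :
    Relation.EqvGen r' a b := by
  induction hab with
  | rel a b hab => exact h a b hab
  | refl a => exact Relation.EqvGen.refl a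
  | symm a b _ ih => exact ih.symm
  | trans a b c _ _ ih1 ih2 => exact ih1.trans _ _ _ ih2

theorem HasDrawing.step {V L : Type} {w : V → Pl} {Reg : L → Set Pl} {R : L → V → V → Prop} {Z : Set Pl}
    (v0 : V) (h : Pl ≃ₜ Pl) (r : ℝ) (hr : 0 < r) (h0 : h (w v0) = w v0)
    (hw : ∀ v, dist (h (w v)) (w v0) ≤ r → v = v0)
    (hZ : ∀ x ∈ Z, r < dist (h x) (w v0))
    (hReg : ∀ l x, x ∈ Reg l → dist (h x) (w v0) ≤ r → ∀ y, dist (h y) (w v0) ≤ r → y ∈ Reg l)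
    (hD : HasDrawing w Reg R ({x | dist (h x) (w v0) < r} ∪ Z)) : HasDrawing w Reg R Z := by
  classical
  obtain ⟨ι, lab, s, t, S, h1, h2, h3⟩ := hD
  have hsym : h.symm (w v0) = w v0 := by rw [Homeomorph.symm_apply_eq, h0]
  have hfar : ∀ v, v ≠ v0 → r < dist (h (w v)) (w v0) := by
    intro v hv; by_contra hcon; exact hv (hw v (not_lt.1 hcon))
  let meets : ι → Prop := fun i => ∃ y ∈ S i, dist (h y) (w v0) < r
  have hcut : ∀ i, ∃ (O : Bool → Set Pl) (x : Bool → Pl), meets i →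
      (s i ≠ v0 → GoodCut h (w v0) r (S i) (O true) (x true) (w (s i))) ∧
      (t i ≠ v0 → GoodCut h (w v0) r (S i) (O false) (x false) (w (t i))) ∧
      (s i ≠ v0 → t i ≠ v0 → Disjoint (O true) (O false)) := by
    intro i
    by_cases hm : meets i
    · obtain ⟨O, x, g1, g2, g3⟩ := exists_cut hr (h1 i).2.1 hm
      exact ⟨O, x, fun _ => ⟨fun hs => g1 (hfar _ hs), fun ht => g2 (hfar _ ht),
        fun hs ht => g3 (hfar _ hs) (hfar _ ht)⟩⟩
    · exact ⟨fun _ => ∅, fun _ => 0, fun hm' => absurd hm' hm⟩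
  choose O x hOx using hcut
  let en : ι → Bool → V := fun i o => if o then s i else t i
  have hgood : ∀ i o, meets i → en i o ≠ v0 →
      GoodCut h (w v0) r (S i) (O i o) (x i o) (w (en i o)) := by
    intro i o hm hne
    cases o
    · simpa [en] using (hOx i hm).2.1 (by simpa [en] using hne)
    · simpa [en] using (hOx i hm).1 (by simpa [en] using hne)
  have hdisj : ∀ i o o', meets i → en i o ≠ v0 → en i o' ≠ v0 → o ≠ o' → Disjoint (O i o) (O i o') := by
    intro i o o' hm ho ho' hoo
    cases o <;> cases o'
    · exact absurd rfl hoo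
    · exact ((hOx i hm).2.2 (by simpa [en] using ho') (by simpa [en] using ho)).symm
    · exact ((hOx i hm).2.2 (by simpa [en] using ho) (by simpa [en] using ho'))
    · exact absurd rfl hoo
  -- the new index type
  let J : Type := {j : ι × Option Bool // (j.2 = none ∧ ¬ meets j.1) ∨
    ∃ o, j.2 = some o ∧ meets j.1 ∧ en j.1 o ≠ v0}
  let OO : J → Set Pl := fun j => match j.1.2 with
    | none => S j.1.1
    | some o => O j.1.1 o
  let SS : J → Set Pl := fun j => match j.1.2 with
    | none => S j.1.1
    | some o => O j.1.1 o ∪ radArc h (w v0) (x j.1.1 o)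
  let s' : J → V := fun j => match j.1.2 with
    | none => s j.1.1
    | some o => en j.1.1 o
  let t' : J → V := fun j => match j.1.2 with
    | none => t j.1.1
    | some _ => v0
  -- unified description
  have hOS : ∀ j, OO j ⊆ S j.1.1 := by
    rintro ⟨⟨i, o⟩, hj⟩
    rcases hj with ⟨ho, hm⟩ | ⟨o', ho, hm, hne⟩ <;> simp only at ho hm <;> subst ho
    · exact subset_rfl
    · exact (hgood i o' hm hne).1
  have hOd : ∀ j, ∀ y ∈ OO j, r ≤ dist (h y) (w v0) := by
    rintro ⟨⟨i, o⟩, hj⟩ y hy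
    rcases hj with ⟨ho, hm⟩ | ⟨o', ho, hm, hne⟩ <;> simp only at ho hm <;> subst ho
    · by_contra hcon; exact hm ⟨y, hy, not_le.1 hcon⟩
    · by_contra hcon
      obtain ⟨-, -, g3, g4, g5, -⟩ := hgood i o' hm hne
      rw [g5 y hy (not_le.1 hcon).le] at hcon
      exact hcon g4.ge
  have hSS : ∀ j, ∀ y ∈ SS j, y ∈ OO j ∨ ∃ x ∈ OO j, dist (h x) (w v0) = r ∧ y ∈ radArc h (w v0) x := by
    rintro ⟨⟨i, o⟩, hj⟩ y hy
    rcases hj with ⟨ho, hm⟩ | ⟨o', ho, hm, hne⟩ <;> simp only at ho hm <;> subst ho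
    · exact Or.inl hy
    · obtain ⟨-, -, g3, g4, g5, -⟩ := hgood i o' hm hne
      rcases hy with hy | hy
      · exact Or.inl hy
      · exact Or.inr ⟨_, g3, g4, hy⟩
  have hdis : ∀ j j' : J, j ≠ j' → j.1.1 = j'.1.1 → Disjoint (OO j) (OO j') := by
    rintro ⟨⟨i, o⟩, hj⟩ ⟨⟨i', o'⟩, hj'⟩ hne hii
    simp only at hii
    subst hii
    rcases hj with ⟨ho, hm⟩ | ⟨u, ho, hm, hn⟩ <;> rcases hj' with ⟨ho', hm'⟩ | ⟨u', ho', hm', hn'⟩ <;>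
      simp only at ho hm ho' hm' <;> subst ho <;> subst ho'
    · exact absurd rfl hne
    · exact absurd hm' hm
    · exact absurd hm hm'
    · refine hdisj i u u' hm hn hn' ?_
      rintro rfl; exact hne rfl
  -- intersections of the outer parts
  have hOO : ∀ j j' : J, j ≠ j' → ∀ y ∈ OO j, y ∈ OO j' → y ∈ range w ∨ y ∈ Z := by
    intro j j' hne y hy hy'
    by_cases hii : j.1.1 = j'.1.1
    · exact absurd hy' (Set.disjoint_left.1 (hdis j j' hne hii) hy)
    · rcases h2 _ _ hii y (hOS j hy) (hOS j' hy') with h | h | h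
      · exact Or.inl h
      · exact absurd h (not_lt.2 (hOd j y hy))
      · exact Or.inr h
  have hbd : ∀ y, (y ∈ range w ∨ y ∈ Z) → dist (h y) (w v0) ≠ r := by
    rintro y (⟨v, rfl⟩ | hy) heq
    · have := hw v heq.le
      subst this
      rw [h0, dist_self] at heq
      exact hr.ne heq
    · exact (hZ y hy).ne' heq
  refine ⟨J, fun j => lab j.1.1, s', t', SS, ?_, ?_, ?_⟩
  · rintro ⟨⟨i, o⟩, hj⟩
    rcases hj with ⟨ho, hm⟩ | ⟨o', ho, hm, hne⟩ <;> simp only at ho hm <;> subst ho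
    · exact h1 i
    · obtain ⟨g1, g2, g3, g4, g5, g6⟩ := hgood i o' hm hne
      rw [hsym] at g6
      have hx : x i o' ∈ Reg (lab i) := (h1 i).2.2.1 (g1 g3)
      refine ⟨hne, g6, ?_, ?_⟩
      · rintro y (hy | hy)
        · exact (h1 i).2.2.1 (g1 hy)
        · exact hReg (lab i) _ hx g4.le y ((radArc_dist hy).1.trans g4.le)
      · rintro v (hv | hv)
        · left
          by_contra hvne
          change v ≠ en i o' at hvne
          have hv' : v = en i (!o') := by
            rcases (h1 i).2.2.2 v (g1 hv) with h | h <;> cases o' <;> simp [en] at hvne ⊢ <;>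
              first | exact h | exact absurd h hvne
          by_cases hv0 : v = v0
          · have hd := hOd ⟨(i, some o'), Or.inr ⟨o', rfl, hm, hne⟩⟩ (w v) hv
            rw [hv0, h0, dist_self] at hd
            linarith
          · rw [hv'] at hv0
            have := (hgood i (!o') hm hv0).2.1
            rw [← hv'] at this
            exact Set.disjoint_left.1 (hdisj i o' (!o') hm hne hv0 (by cases o' <;> simp)) hv this
        · right
          exact hw v ((radArc_dist hv).1.trans g4.le)
  · intro j j' hne y hy hy'
    rcases hSS j y hy with hO | ⟨a, ha, har, hya⟩
    · rcases hSS j' y hy' with hO' | ⟨a', ha', har', hya'⟩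
      · exact hOO j j' hne y hO hO'
      · have hle := (radArc_dist hya').1
        rw [har'] at hle
        have heq := le_antisymm hle (hOd j y hO)
        have := (radArc_dist hya').2 (by rw [heq, har']) (by rw [har']; exact hr.ne')
        subst this
        exact hOO j j' hne y hO ha'
    · rcases hSS j' y hy' with hO' | ⟨a', ha', har', hya'⟩
      · have hle := (radArc_dist hya).1
        rw [har] at hle
        have heq := le_antisymm hle (hOd j' y hO')
        have := (radArc_dist hya).2 (by rw [heq, har]) (by rw [har]; exact hr.ne')
        subst this
        exact hOO j j' hne y ha hO'
      · have haa : a ≠ a' := by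
          rintro rfl
          exact hbd a (hOO j j' hne a ha ha') har
        have := radArc_inter hr har har' haa hya hya'
        left
        refine ⟨v0, ?_⟩
        rw [← hsym, ← this, Homeomorph.symm_apply_apply]
  · intro l p q hpq
    refine eqvGen_trans_of ?_ (h3 l p q hpq)
    rintro a b ⟨i, rfl, rfl, rfl⟩
    by_cases hm : meets i
    · have key : ∀ o, Relation.EqvGen (fun p q => ∃ j : J, lab j.1.1 = lab i ∧ s' j = p ∧ t' j = q)
          (en i o) v0 := by
        intro o
        by_cases hne : en i o = v0
        · rw [hne]; exact Relation.EqvGen.refl _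
        · exact Relation.EqvGen.rel _ _ ⟨⟨(i, some o), Or.inr ⟨o, rfl, hm, hne⟩⟩, rfl, rfl, rfl⟩
      have e1 := key true
      have e2 := key false
      simp only [en, if_true, Bool.false_eq_true, if_false] at e1 e2
      exact e1.trans _ _ _ e2.symm
    · exact Relation.EqvGen.rel _ _ ⟨⟨(i, none), Or.inl ⟨rfl, hm⟩⟩, rfl, rfl, rfl⟩

/-- iterate the surgery over finitely many pairwise disjoint discs -/
theorem HasDrawing.iterate {V L : Type} {w : V → Pl} {Reg : L → Set Pl} {R : L → V → V → Prop}
    (h : V → Pl ≃ₜ Pl) (r : V → ℝ) (s : Finset V) (hr : ∀ v ∈ s, 0 < r v)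
    (h0 : ∀ v ∈ s, h v (w v) = w v)
    (hw : ∀ v ∈ s, ∀ u, dist (h v (w u)) (w v) ≤ r v → u = v)
    (hd : ∀ v ∈ s, ∀ u ∈ s, u ≠ v → ∀ x, dist (h v x) (w v) ≤ r v → dist (h u x) (w u) ≤ r u → False)
    (hReg : ∀ v ∈ s, ∀ l x, x ∈ Reg l → dist (h v x) (w v) ≤ r v →
      ∀ y, dist (h v y) (w v) ≤ r v → y ∈ Reg l)
    (hD : HasDrawing w Reg R (⋃ v ∈ s, {x | dist (h v x) (w v) < r v})) : HasDrawing w Reg R ∅ := by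
  classical
  induction s using Finset.induction_on with
  | empty => simpa using hD
  | @insert a s ha ih =>
    have hin : ∀ v ∈ s, v ∈ insert a s := fun v hv => Finset.mem_insert_of_mem hv
    have haa := Finset.mem_insert_self a s
    apply ih (fun v hv => hr v (hin v hv)) (fun v hv => h0 v (hin v hv)) (fun v hv => hw v (hin v hv))
      (fun v hv u hu => hd v (hin v hv) u (hin u hu)) (fun v hv => hReg v (hin v hv))
    rw [Finset.set_biUnion_insert] at hD
    refine HasDrawing.step a (h a) (r a) (hr a haa) (h0 a haa) (hw a haa) ?_ (hReg a haa) hD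
    intro x hx
    simp only [mem_iUnion] at hx
    obtain ⟨v, hv, hx⟩ := hx
    by_contra hcon
    exact hd a haa v (hin v hv) (by rintro rfl; exact ha hv) x (not_lt.1 hcon) (le_of_lt hx)

end PartPF

section PartPG

open Set Metric Topology

lemma eqvGen_mono_of {α : Type*} {r r' : α → α → Prop}
    (h : ∀ a b, r a b → r' a b) {a b : α} (hab : Relation.EqvGen r a b) :
    Relation.EqvGen r' a b := eqvGen_trans_of (fun a b hr => .rel _ _ (h a b hr)) hab

lemma enum_set {V : Type} [Finite V] (C : Set V) (p : V) :
    ∃ (m : ℕ) (u : ℕ → V), (∀ i < m, u i ∈ C) ∧ (∀ i < m, ∀ j < m, u i = u j → i = j) ∧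
      ∀ v ∈ C, ∃ i < m, u i = v := by
  classical
  obtain ⟨m, ⟨e⟩⟩ := Finite.exists_equiv_fin C
  refine ⟨m, fun i => if h : i < m then (e.symm ⟨i, h⟩ : V) else p, ?_, ?_, ?_⟩
  · intro i hi
    simp only [hi, dif_pos]; exact (e.symm ⟨i, hi⟩).2
  · intro i hi j hj h
    simp only [hi, hj, dif_pos] at h
    have := e.symm.injective (Subtype.ext h)
    simpa using this
  · intro v hv
    refine ⟨e ⟨v, hv⟩, (e ⟨v, hv⟩).2, ?_⟩
    simp

lemma initial_aux {V L : Type} [Finite V] (w : V → Pl) (hw : Function.Injective w)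
    (Reg : L → Set Pl) (hReg : ∀ l, IsOpen (Reg l)) (J : Finset (L × V)) :
    ∃ (ι : Type) (_ : Finite ι) (lab : ι → L) (s t : ι → V) (S : ι → Set Pl) (X : Set Pl),
      X.Finite ∧
      (∀ i, s i ≠ t i ∧ IsArc (S i) (w (s i)) (w (t i)) ∧ Thin (S i) ∧
        (∃ p, (lab i, p) ∈ J ∧ S i ⊆ pathComponentIn (Reg (lab i)) (w p)) ∧
        ∀ v, w v ∈ S i → v = s i ∨ v = t i) ∧
      (∀ i j, i ≠ j → ∀ x ∈ S i, x ∈ S j → x ∈ range w ∨ (x ∈ X ∧ lab i ≠ lab j)) ∧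
      ∀ l p, (l, p) ∈ J → ∀ q, JoinedIn (Reg l) (w p) (w q) →
        Relation.EqvGen (fun p q => ∃ i, lab i = l ∧ s i = p ∧ t i = q) p q := by
  classical
  induction J using Finset.induction_on with
  | empty =>
    exact ⟨Empty, inferInstance, fun i => i.elim, fun i => i.elim, fun i => i.elim,
      fun i => i.elim, ∅, finite_empty, fun i => i.elim, fun i => i.elim, by simp⟩
  | insert lp J hlp ih =>
    obtain ⟨l, p⟩ := lp
    obtain ⟨ι, hι, lab, s, t, S, X, hX, h1, h2, h3⟩ := ih
    by_cases hold : (∃ p', (l, p') ∈ J ∧ JoinedIn (Reg l) (w p') (w p)) ∨ w p ∉ Reg l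
    · refine ⟨ι, hι, lab, s, t, S, X, hX, ?_, h2, ?_⟩
      · intro i
        obtain ⟨a, b, c, ⟨q, hq, hq'⟩, e⟩ := h1 i
        exact ⟨a, b, c, ⟨q, Finset.mem_insert_of_mem hq, hq'⟩, e⟩
      · intro l' p' hm q hj
        rcases Finset.mem_insert.1 hm with h | h
        · obtain ⟨rfl, rfl⟩ := Prod.mk.inj h
          rcases hold with ⟨p'', hp'', hj'⟩ | hn
          · exact ((h3 _ _ hp'' _ hj').symm).trans _ _ _ (h3 _ _ hp'' _ (hj'.trans hj))
          · exact absurd hj.source_mem hn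
        · exact h3 _ _ h _ hj
    · push Not at hold
      obtain ⟨hnew, hpR⟩ := hold
      set U := pathComponentIn (Reg l) (w p) with hU
      have hUo : IsOpen U := (hReg l).pathComponentIn _
      have hUc : IsPathConnected U := isPathConnected_pathComponentIn hpR
      obtain ⟨m, u, hu1, hu2, hu3⟩ := enum_set {q : V | JoinedIn (Reg l) (w p) (w q)} p
      have hK : Thin (⋃ i ∈ (univ : Set ι), S i) :=
        Thin.biUnion finite_univ S (fun i _ => (h1 i).2.2.1)
      obtain ⟨S', hS1, hS2⟩ := exists_chain hUo hUc m (fun i => w (u i))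
        (fun i hi => hu1 i hi) (fun i hi j hj h => hu2 i hi j hj (hw h)) hK
      let κ := {i : Fin m // i.1 + 1 < m}
      have hvU : ∀ v, w v ∈ U → ∃ i < m, u i = v := fun v hv => hu3 v hv
      refine ⟨ι ⊕ κ, inferInstance, Sum.elim lab (fun _ => l), Sum.elim s (fun i => u i.1),
        Sum.elim t (fun i => u (i.1 + 1)), Sum.elim S (fun i => S' i.1),
        X ∪ ⋃ i : κ, (S' i.1 ∩ ⋃ i ∈ (univ : Set ι), S i), ?_, ?_, ?_, ?_⟩
      · exact hX.union (finite_iUnion fun i => (hS1 i.1 i.2).2.2.2.1)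
      · rintro (i | i)
        · obtain ⟨a, b, c, ⟨q, hq, hq'⟩, e⟩ := h1 i
          exact ⟨a, b, c, ⟨q, Finset.mem_insert_of_mem hq, hq'⟩, e⟩
        · obtain ⟨a, b, c, d, e⟩ := hS1 i.1 i.2
          refine ⟨?_, a, c, ⟨p, Finset.mem_insert_self _ _, b⟩, ?_⟩
          · intro h
            have := hu2 _ i.1.2 _ i.2 h
            omega
          · intro v hv
            obtain ⟨j, hj, rfl⟩ := hvU v (b hv)
            rcases e j hj hv with h | h
            · left; simp [h]
            · right; simp [h]
      · have key : ∀ (i : ι) (j : κ) (x), x ∈ S i → x ∈ S' j.1 → lab i ≠ l := by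
          intro i j x hx hx' hl
          obtain ⟨q, hq, hq'⟩ := (h1 i).2.2.2.1
          have a := hq' hx
          have b := (hS1 j.1 j.2).2.1 hx'
          rw [hl] at hq a
          exact hnew q hq (JoinedIn.trans a (JoinedIn.symm b))
        rintro (i | i) (j | j) hij x hx hx'
        · rcases h2 i j (fun h => hij (by rw [h])) x hx hx' with h | h
          · exact Or.inl h
          · exact Or.inr ⟨Or.inl h.1, h.2⟩
        · refine Or.inr ⟨Or.inr (mem_iUnion.2 ⟨j, hx', ?_⟩), key i j x hx hx'⟩
          exact mem_iUnion₂.2 ⟨i, mem_univ _, hx⟩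
        · refine Or.inr ⟨Or.inr (mem_iUnion.2 ⟨i, hx, ?_⟩), (key j i x hx' hx).symm⟩
          exact mem_iUnion₂.2 ⟨j, mem_univ _, hx'⟩
        · left
          have hne : i.1.1 ≠ j.1.1 := fun h => hij (by rw [Subtype.ext (Fin.ext h)])
          rcases lt_or_gt_of_ne hne with h | h
          · obtain ⟨l, _, hl⟩ := hS2 _ _ h j.2 x hx hx'
            exact ⟨_, hl.symm⟩
          · obtain ⟨l, _, hl⟩ := hS2 _ _ h i.2 x hx' hx
            exact ⟨_, hl.symm⟩
      · intro l' p' hm q hj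
        rcases Finset.mem_insert.1 hm with h | h
        · obtain ⟨rfl, rfl⟩ := Prod.mk.inj h
          have chain : ∀ i < m, Relation.EqvGen (fun p q => ∃ i : ι ⊕ κ,
              Sum.elim lab (fun _ => l') i = l' ∧ Sum.elim s (fun i => u i.1) i = p ∧
              Sum.elim t (fun i => u (i.1 + 1)) i = q) (u 0) (u i) := by
            intro i
            induction i with
            | zero => intro _; exact .refl _
            | succ i ih =>
              intro hi
              exact (ih (by omega)).trans _ _ _
                (.rel _ _ ⟨Sum.inr ⟨⟨i, by omega⟩, hi⟩, rfl, rfl, rfl⟩)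
          obtain ⟨a, ha, rfl⟩ := hu3 q hj
          obtain ⟨c, hc, hcp⟩ := hu3 p' (JoinedIn.refl hpR)
          rw [← hcp]
          exact (chain c hc).symm.trans _ _ _ (chain a ha)
        · exact eqvGen_mono_of (fun a b ⟨i, hi⟩ => ⟨Sum.inl i, hi⟩) (h3 _ _ h _ hj)

lemma initial {V L : Type} [Finite V] [Finite L] (w : V → Pl) (hw : Function.Injective w)
    (Reg : L → Set Pl) (hReg : ∀ l, IsOpen (Reg l)) :
    ∃ X : Set Pl, X.Finite ∧ Disjoint X (range w) ∧
      (∀ x ∈ X, ∃ l l', l ≠ l' ∧ x ∈ Reg l ∧ x ∈ Reg l') ∧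
      HasDrawing w Reg (fun l p q => JoinedIn (Reg l) (w p) (w q)) X := by
  classical
  have := Fintype.ofFinite V
  have := Fintype.ofFinite L
  obtain ⟨ι, hι, lab, s, t, S, X, hX, h1, h2, h3⟩ :=
    initial_aux w hw Reg hReg Finset.univ
  have hsub : ∀ i, S i ⊆ Reg (lab i) := fun i => by
    obtain ⟨p, _, hp⟩ := (h1 i).2.2.2.1
    exact hp.trans pathComponentIn_subset
  refine ⟨{x ∈ X | x ∉ range w ∧ ∃ l l', l ≠ l' ∧ x ∈ Reg l ∧ x ∈ Reg l'},
    hX.subset (fun x hx => hx.1), ?_, fun x hx => hx.2.2, ι, lab, s, t, S, ?_, ?_, ?_⟩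
  · exact Set.disjoint_left.2 fun x hx => hx.2.1
  · intro i
    exact ⟨(h1 i).1, (h1 i).2.1, hsub i, (h1 i).2.2.2.2⟩
  · intro i j hij x hx hx'
    by_cases hr : x ∈ range w
    · exact Or.inl hr
    · rcases h2 i j hij x hx hx' with h | h
      · exact absurd h hr
      · exact Or.inr ⟨h.1, hr, _, _, h.2, hsub i hx, hsub j hx'⟩
  · intro l p q h
    exact h3 l p (Finset.mem_univ _) q h

end PartPG

section PartPH

open Set Metric Topology

lemma HasDrawing.mono {V L : Type} {w : V → Pl} {Reg : L → Set Pl} {R : L → V → V → Prop}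
    {Z Z' : Set Pl} (h : HasDrawing w Reg R Z) (hZ : Z ⊆ Z') : HasDrawing w Reg R Z' := by
  obtain ⟨ι, lab, s, t, S, h1, h2, h3⟩ := h
  exact ⟨ι, lab, s, t, S, h1, fun i j hij x hx hx' => (h2 i j hij x hx hx').imp id (@hZ x), h3⟩

lemma nerve_no_top {n k : ℕ} {A : Fin n → Set Pl} (h1 : fNum A (k + 1) = 0)
    (ρ : Finset (Fin n)) (hρ : k + 2 ≤ ρ.card) (x : Pl) (hx : x ∈ ⋂ i ∈ ρ, A i) : False := by
  obtain ⟨ρ', hsub, hc⟩ := Finset.exists_subset_card_eq hρ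
  unfold fNum at h1
  have : IsEmpty (NerveTop A (k + 1)) := by
    rcases Nat.card_eq_zero.1 h1 with h | h
    · exact h
    · exact absurd (inferInstance : Finite (NerveTop A (k+1))) (not_finite_iff_infinite.2 h)
  refine this.false ⟨ρ', hc, x, ?_⟩
  simp only [mem_iInter] at hx ⊢
  exact fun i hi => hx i (hsub hi)

lemma nerve_sub {n k : ℕ} {A : Fin n → Set Pl} (h1 : fNum A (k + 1) = 0)
    (τ σ : Finset (Fin n)) (hσ : σ.card = k + 1) (x : Pl) (hx : x ∈ ⋂ i ∈ τ, A i)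
    (hx' : x ∈ ⋂ i ∈ σ, A i) : τ ⊆ σ := by
  classical
  by_contra hn
  obtain ⟨i, hi, hi'⟩ := Finset.not_subset.1 hn
  refine nerve_no_top h1 (insert i σ) ?_ x ?_
  · rw [Finset.card_insert_of_notMem hi', hσ]
  · simp only [mem_iInter] at hx hx' ⊢
    intro j hj
    rcases Finset.mem_insert.1 hj with rfl | h
    · exact hx _ hi
    · exact hx' _ h

lemma inter_mono {n : ℕ} {A : Fin n → Set Pl} {τ σ : Finset (Fin n)} (h : τ ⊆ σ) :
    (⋂ i ∈ σ, A i) ⊆ ⋂ i ∈ τ, A i := by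
  intro x hx
  simp only [mem_iInter] at hx ⊢
  exact fun i hi => hx i (h hi)

lemma final_drawing (b k n : ℕ)
    (A : Fin n → Set Pl)
    (h1 : fNum A (k + 1) = 0)
    (h2 : ∀ σ : Finset (Fin n), σ.card = k ∨ σ.card = k + 1 → IsOpen (⋂ i ∈ σ, A i))
    (w : NerveTop A k → Fin b → Pl)
    (hw : ∀ (p : NerveTop A k) (j : Fin b), w p j ∈ ⋂ i ∈ p.1, A i)
    (hwinj : Function.Injective fun q : NerveTop A k × Fin b => w q.1 q.2)
    (hwcover : ∀ (p : NerveTop A k), ∀ x ∈ ⋂ i ∈ p.1, A i,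
      ∃ j : Fin b, JoinedIn (⋂ i ∈ p.1, A i) x (w p j)) :
    HasDrawing (V := NerveTop A k × Fin b) (L := {τ : Finset (Fin n) // τ.card = k})
      (fun q => w q.1 q.2) (fun τ => ⋂ i ∈ τ.1, A i)
      (fun l p q => JoinedIn (⋂ i ∈ l.1, A i) (w p.1 p.2) (w q.1 q.2)) ∅ := by
  classical
  set W : NerveTop A k × Fin b → Pl := fun q => w q.1 q.2 with hWdef
  set Reg : {τ : Finset (Fin n) // τ.card = k} → Set Pl := fun τ => ⋂ i ∈ τ.1, A i with hReg
  set C : NerveTop A k × Fin b → Set Pl := fun v => pathComponentIn (⋂ i ∈ v.1.1, A i) (W v)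
    with hC
  obtain ⟨X, hX, hXW, hXl, hD⟩ := initial W hwinj Reg (fun l => h2 l.1 (Or.inl l.2))
  have hdisc : ∀ v : NerveTop A k × Fin b, ∃ (h : Pl ≃ₜ Pl) (r : ℝ), 0 < r ∧ h (W v) = W v ∧
      (∀ x ∈ X ∩ C v, dist (h x) (W v) < r) ∧
      ∀ x, dist (h x) (W v) ≤ r → x ∈ C v ∧ x ∉ range W \ {W v} := by
    intro v
    refine exists_disc ((h2 v.1.1 (Or.inr v.1.2.1)).pathComponentIn _)
      (isPathConnected_pathComponentIn (hw _ _))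
      (mem_pathComponentIn_self (hw _ _)) (hX.inter_of_left _) ((finite_range W).sdiff)
      inter_subset_right ?_ ?_
    · exact hXW.mono inter_subset_left sdiff_subset
    · exact fun h => h.2 rfl
  choose h r hr h0 hin hout using hdisc
  have := Fintype.ofFinite (NerveTop A k × Fin b)
  obtain ⟨s, hms⟩ : ∃ s : Finset (NerveTop A k × Fin b), ∀ v, v ∈ s ↔ ∀ j : Fin b,
      JoinedIn (⋂ i ∈ v.1.1, A i) (W v) (w v.1 j) → v.2 ≤ j :=
    ⟨Finset.univ.filter fun v => ∀ j : Fin b,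
      JoinedIn (⋂ i ∈ v.1.1, A i) (W v) (w v.1 j) → v.2 ≤ j, fun v => by simp⟩
  have hCsub : ∀ v, C v ⊆ ⋂ i ∈ v.1.1, A i := fun v => pathComponentIn_subset
  refine HasDrawing.iterate h r s (fun v _ => hr v) (fun v _ => h0 v) ?_ ?_ ?_ (hD.mono ?_)
  · intro v _ u hu
    by_contra hne
    exact (hout v _ hu).2 ⟨⟨u, rfl⟩, fun h => hne (hwinj h)⟩
  · intro v hv u hu huv x hxv hxu
    have a := (hout v x hxv).1
    have c := (hout u x hxu).1
    have e1 := nerve_sub h1 v.1.1 u.1.1 u.1.2.1 x (hCsub v a) (hCsub u c)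
    have e2 := nerve_sub h1 u.1.1 v.1.1 v.1.2.1 x (hCsub u c) (hCsub v a)
    have e : u.1 = v.1 := Subtype.ext (Finset.Subset.antisymm e2 e1)
    obtain ⟨uσ, uj⟩ := u
    obtain ⟨vσ, vj⟩ := v
    simp only at e
    subst e
    have j1 : JoinedIn (⋂ i ∈ uσ.1, A i) (w uσ vj) (w uσ uj) :=
      JoinedIn.trans a (JoinedIn.symm c)
    have l1 := (hms _).1 hv uj j1
    have l2 := (hms _).1 hu vj j1.symm
    exact huv (Prod.ext rfl (le_antisymm l2 l1))
  · intro v _ l x hx hxv y hyv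
    have a := hCsub v (hout v x hxv).1
    have c := hCsub v (hout v y hyv).1
    exact inter_mono (nerve_sub h1 l.1 v.1.1 v.1.2.1 x hx a) c
  · intro x hx
    obtain ⟨l, l', hne, hl, hl'⟩ := hXl x hx
    have hxu : x ∈ ⋂ i ∈ l.1 ∪ l'.1, A i := by
      simp only [hReg, mem_iInter] at hl hl' ⊢
      intro i hi
      rcases Finset.mem_union.1 hi with h | h
      · exact hl i h
      · exact hl' i h
    have hcard : (l.1 ∪ l'.1).card = k + 1 := by
      have u1 : ¬ k + 2 ≤ (l.1 ∪ l'.1).card := fun h => nerve_no_top h1 _ h x hxu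
      have u2 : k < (l.1 ∪ l'.1).card := by
        by_contra hle
        have hle' : (l.1 ∪ l'.1).card ≤ k := by omega
        have e1 := Finset.eq_of_subset_of_card_le (Finset.subset_union_left (s₁ := l.1) (s₂ := l'.1))
          (by rw [l.2]; exact hle')
        have e2 := Finset.eq_of_subset_of_card_le (Finset.subset_union_right (s₁ := l.1) (s₂ := l'.1))
          (by rw [l'.2]; exact hle')
        exact hne (Subtype.ext (e1.trans e2.symm))
      omega
    let σ : NerveTop A k := ⟨l.1 ∪ l'.1, hcard, x, hxu⟩
    obtain ⟨j, hj⟩ := hwcover σ x hxu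
    obtain ⟨j0, hj0, hmin⟩ := Finset.exists_min_image
      (Finset.univ.filter fun j => JoinedIn (⋂ i ∈ σ.1, A i) x (w σ j)) id
      ⟨j, by simpa using hj⟩
    simp only [Finset.mem_filter, Finset.mem_univ, true_and, id] at hj0 hmin
    have hv : ((σ, j0) : NerveTop A k × Fin b) ∈ s :=
      (hms _).2 fun j' hj' => hmin j' (hj0.trans hj')
    exact mem_iUnion₂.2 ⟨(σ, j0), hv, hin (σ, j0) x ⟨hx, hj0.symm⟩⟩

end PartPH

section PartPI

lemma forest_card {b : ℕ} (hb : 1 ≤ b) (G : SimpleGraph (Fin b)) (hG : G.IsAcyclic) :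
    Nat.card G.edgeSet ≤ b - 1 := by
  classical
  have : Nonempty (Fin b) := ⟨⟨0, hb⟩⟩
  obtain ⟨F, h1, -, h2⟩ := (SimpleGraph.connected_top (V := Fin b)).exists_isTree_le_of_le_of_isAcyclic
    (le_top : G ≤ ⊤) hG
  have h3 := h2.card_edgeFinset
  rw [Nat.card_eq_fintype_card, ← SimpleGraph.edgeFinset_card]
  have h4 : G.edgeFinset.card ≤ F.edgeFinset.card :=
    Finset.card_le_card (SimpleGraph.edgeFinset_mono h1)
  simp at h3 ⊢
  omega

lemma fiber_card {P : Type} [Finite P] {b : ℕ} (hb : 1 ≤ b) (G : SimpleGraph (P × Fin b))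
    (hG : G.IsAcyclic) (σ : P) (E : Finset (Sym2 (P × Fin b)))
    (hE : ∀ e ∈ E, e ∈ G.edgeSet ∧ ∀ v ∈ e, v.1 = σ) : E.card ≤ b - 1 := by
  classical
  let f : Fin b ↪ P × Fin b := ⟨fun j => (σ, j), fun i j h => (Prod.mk.inj h).2⟩
  have h1 := forest_card hb (G.comap f) (hG.of_comap f)
  refine le_trans ?_ h1
  rw [Nat.card_eq_fintype_card, ← SimpleGraph.edgeFinset_card]
  refine le_trans (Finset.card_le_card (t := (G.comap f).edgeFinset.image (Sym2.map f)) ?_)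
    Finset.card_image_le
  intro e he
  obtain ⟨h2, h3⟩ := hE e he
  induction e with | _ p q =>
  obtain ⟨pσ, pj⟩ := p
  obtain ⟨qσ, qj⟩ := q
  have e1 : pσ = σ := h3 _ (Sym2.mem_mk_left _ _)
  have e2 : qσ = σ := h3 _ (Sym2.mem_mk_right _ _)
  subst e1
  subst e2
  rw [Finset.mem_image]
  refine ⟨s(pj, qj), ?_, rfl⟩
  rw [SimpleGraph.mem_edgeFinset]
  exact h2

lemma count_edges {P : Type} [Finite P] {b k n : ℕ} (hb : 1 ≤ b)
    (σ : P → Finset (Fin n)) (hσ : Function.Injective σ) (hc : ∀ p, (σ p).card = k + 1)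
    (T : Finset (Fin n) → SimpleGraph (P × Fin b)) (hT : ∀ τ, (T τ).IsAcyclic)
    (hsub : ∀ τ p q, (T τ).Adj p q → τ ⊆ σ p.1 ∧ τ ⊆ σ q.1)
    (Γ : SimpleGraph (P × Fin b)) (hΓ : ∀ τ, τ.card = k → T τ ≤ Γ)
    (hm : Nat.card Γ.edgeSet ≤ 3 * Nat.card (P × Fin b)) :
    (∑ τ ∈ Finset.univ.filter (fun τ : Finset (Fin n) => τ.card = k), Nat.card (T τ).edgeSet)
      ≤ 3 * (b * Nat.card P) + k * (b - 1) * Nat.card P := by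
  classical
  have := Fintype.ofFinite P
  have hst : ∀ p, ∃ τ, τ ⊆ σ p ∧ τ.card = k := fun p =>
    Finset.exists_subset_card_eq (by rw [hc p]; omega)
  choose st hst1 hst2 using hst
  set F := Finset.univ.filter (fun τ : Finset (Fin n) => τ.card = k) with hF
  let bad : Finset (Fin n) → Sym2 (P × Fin b) → Prop := fun τ e =>
    ∃ p, τ ⊆ σ p ∧ τ ≠ st p ∧ ∀ v ∈ e, v.1 = p
  have hsplit : ∀ τ, Nat.card (T τ).edgeSet =
      ((T τ).edgeFinset.filter (fun e => ¬ bad τ e)).card +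
      ((T τ).edgeFinset.filter (fun e => bad τ e)).card := by
    intro τ
    rw [Nat.card_eq_fintype_card, ← SimpleGraph.edgeFinset_card, add_comm,
      Finset.card_filter_add_card_filter_not]
  simp_rw [hsplit]
  rw [Finset.sum_add_distrib]
  refine add_le_add ?_ ?_
  · have : 3 * (b * Nat.card P) = 3 * Nat.card (P × Fin b) := by
      rw [Nat.card_prod, Nat.card_fin, mul_comm b]
    rw [this]
    refine le_trans ?_ hm
    rw [Nat.card_eq_fintype_card, ← SimpleGraph.edgeFinset_card, ← Finset.card_sigma]
    refine Finset.card_le_card_of_injOn (fun x => x.2) ?_ ?_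
    · rintro ⟨τ, e⟩ hx
      simp only [Finset.coe_sigma, Set.mem_sigma_iff, Finset.mem_coe, Finset.mem_filter, hF,
        SimpleGraph.mem_edgeFinset, Finset.mem_univ, true_and] at hx ⊢
      exact SimpleGraph.edgeSet_mono (hΓ τ hx.1) hx.2.1
    · rintro ⟨τ, e⟩ hx ⟨τ', e'⟩ hx' hee
      simp only at hee
      subst hee
      simp only [Finset.coe_sigma, Set.mem_sigma_iff, Finset.mem_coe, Finset.mem_filter, hF,
        SimpleGraph.mem_edgeFinset, Finset.mem_univ, true_and] at hx hx'
      suffices τ = τ' by rw [this]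
      induction e with | _ p q =>
      obtain ⟨hx1, hx2, hx3⟩ := hx
      obtain ⟨hx1', hx2', hx3'⟩ := hx'
      have a := hsub _ _ _ hx2
      have a' := hsub _ _ _ hx2'
      by_cases hpq : p.1 = q.1
      · have key : ∀ τ, τ ⊆ σ p.1 → ¬ bad τ s(p, q) → τ = st p.1 := by
          intro τ h1 h2
          by_contra hne
          refine h2 ⟨p.1, h1, hne, ?_⟩
          intro v hv
          rcases Sym2.mem_iff.1 hv with rfl | rfl
          · rfl
          · exact hpq.symm
        rw [key τ a.1 hx3, key τ' a'.1 hx3']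
      · have hlt : (σ p.1 ∩ σ q.1).card ≤ k := by
          by_contra hgt
          have h1 := Finset.eq_of_subset_of_card_le
            (Finset.inter_subset_left (s₁ := σ p.1) (s₂ := σ q.1)) (by rw [hc]; omega)
          have h2 := Finset.eq_of_subset_of_card_le
            (Finset.inter_subset_right (s₁ := σ p.1) (s₂ := σ q.1)) (by rw [hc]; omega)
          exact hpq (hσ (h1.symm.trans h2))
        have h1 := Finset.eq_of_subset_of_card_le (Finset.subset_inter a.1 a.2) (by rw [hx1]; exact hlt)
        have h2 := Finset.eq_of_subset_of_card_le (Finset.subset_inter a'.1 a'.2) (by rw [hx1']; exact hlt)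
        exact h1.trans h2.symm
  · have step : ∀ τ ∈ F, ((T τ).edgeFinset.filter (fun e => bad τ e)).card ≤
        ∑ p : P, if τ ⊆ σ p ∧ τ ≠ st p then b - 1 else 0 := by
      intro τ _
      rw [← Finset.sum_filter]
      refine le_trans (Finset.card_le_card (t := (Finset.univ.filter
        fun p => τ ⊆ σ p ∧ τ ≠ st p).biUnion fun p => (T τ).edgeFinset.filter
          (fun e => ∀ v ∈ e, v.1 = p)) ?_) (le_trans Finset.card_biUnion_le
            (Finset.sum_le_sum ?_))
      · intro e he
        rw [Finset.mem_filter] at he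
        obtain ⟨he, p, h1, h2, h3⟩ := he
        rw [Finset.mem_biUnion]
        exact ⟨p, by simp [h1, h2], by rw [Finset.mem_filter]; exact ⟨he, h3⟩⟩
      · intro p _
        refine fiber_card hb (T τ) (hT τ) p _ ?_
        intro e he
        rw [Finset.mem_filter, SimpleGraph.mem_edgeFinset] at he
        exact he
    refine le_trans (Finset.sum_le_sum step) ?_
    rw [Finset.sum_comm]
    have hp : ∀ p : P, (∑ τ ∈ F, if τ ⊆ σ p ∧ τ ≠ st p then b - 1 else 0) ≤ k * (b - 1) := by
      intro p
      rw [← Finset.sum_filter, Finset.sum_const, smul_eq_mul]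
      refine Nat.mul_le_mul_right _ ?_
      have hsubs : F.filter (fun τ => τ ⊆ σ p ∧ τ ≠ st p) ⊆
          (Finset.powersetCard k (σ p)).erase (st p) := by
        intro τ hτ
        simp only [hF, Finset.mem_filter, Finset.mem_univ, true_and] at hτ
        rw [Finset.mem_erase, Finset.mem_powersetCard]
        exact ⟨hτ.2.2, hτ.2.1, hτ.1⟩
      refine le_trans (Finset.card_le_card hsubs) ?_
      rw [Finset.card_erase_of_mem (Finset.mem_powersetCard.2 ⟨hst1 p, hst2 p⟩),
        Finset.card_powersetCard, hc p]
      simp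
    refine le_trans (Finset.sum_le_sum fun p _ => hp p) ?_
    rw [Finset.sum_const, smul_eq_mul, Finset.card_univ, Nat.card_eq_fintype_card, mul_comm]

end PartPI

section PartPJ

open Set Metric Topology

lemma IsArc.symm' {S : Set Pl} {x y : Pl} (h : IsArc S x y) : IsArc S y x := by
  obtain ⟨γ, h1, h2⟩ := h
  refine ⟨γ.symm, ?_, by rw [Path.symm_range, h2]⟩
  intro a c hac
  have := h1 hac
  simpa using congrArg unitInterval.symm this

lemma IsArc.joinedIn {S F : Set Pl} {x y : Pl} (h : IsArc S x y) (hF : S ⊆ F) :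
    JoinedIn F x y := by
  obtain ⟨γ, h1, h2⟩ := h
  exact ⟨γ, fun t => hF (h2 ▸ mem_range_self t)⟩

lemma forests_of_drawing {V L : Type} (w : V → Pl) (hw : Function.Injective w)
    (Reg : L → Set Pl)
    (hD : HasDrawing w Reg (fun l p q => JoinedIn (Reg l) (w p) (w q)) ∅) :
    ∃ (T : L → SimpleGraph V) (arc : L → Sym2 V → Set Pl),
      (∀ l, (T l).IsAcyclic) ∧
      (∀ l p q, JoinedIn (Reg l) (w p) (w q) → (T l).Reachable p q) ∧
      (∀ l p q, (T l).Adj p q → IsArc (arc l s(p, q)) (w p) (w q) ∧ arc l s(p, q) ⊆ Reg l) ∧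
      (∀ l, ∀ e ∈ (T l).edgeSet, ∀ v, w v ∈ arc l e → v ∈ e) ∧
      (∀ l l', ∀ e ∈ (T l).edgeSet, ∀ e' ∈ (T l').edgeSet, (l, e) ≠ (l', e') →
        ∀ x ∈ arc l e, x ∈ arc l' e' → x ∈ range w) := by
  classical
  obtain ⟨ι, lab, s, t, S, h1, h2, h3⟩ := hD
  let H : L → SimpleGraph V := fun l =>
    SimpleGraph.fromRel (fun p q => ∃ i, lab i = l ∧ s i = p ∧ t i = q)
  have hT : ∀ l, ∃ F ≤ H l, F.IsAcyclic ∧ F.Reachable = (H l).Reachable :=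
    fun l => (H l).exists_isAcyclic_reachable_eq_le
  choose T hle hac hre using hT
  have hidx : ∀ l (e : Sym2 V), e ∈ (T l).edgeSet → ∃ i, lab i = l ∧ s(s i, t i) = e := by
    intro l e he
    induction e with | _ p q =>
    have := hle l he
    rw [SimpleGraph.fromRel_adj] at this
    rcases this.2 with ⟨i, hi, hs, ht⟩ | ⟨i, hi, hs, ht⟩
    · exact ⟨i, hi, by rw [hs, ht]⟩
    · exact ⟨i, hi, by rw [hs, ht, Sym2.eq_swap]⟩
  choose idx hidx1 hidx2 using hidx
  refine ⟨T, fun l e => if h : e ∈ (T l).edgeSet then S (idx l e h) else ∅, hac, ?_, ?_, ?_, ?_⟩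
  · intro l p q hj
    rw [hre l]
    have hEq := h3 l p q hj
    clear hj
    induction hEq with
    | rel a c hac =>
      by_cases hne : a = c
      · rw [hne]
      · exact SimpleGraph.Adj.reachable ((SimpleGraph.fromRel_adj _ _ _).2 ⟨hne, Or.inl hac⟩)
    | refl a => exact SimpleGraph.Reachable.refl _
    | symm a c h ih => exact ih.symm
    | trans a c d _ _ ih1 ih2 => exact ih1.trans ih2
  · intro l p q hpq
    have he : s(p, q) ∈ (T l).edgeSet := hpq
    simp only [he, dif_pos]
    have hi := h1 (idx l s(p, q) he)
    have e1 := hidx1 l _ he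
    have e2 := hidx2 l _ he
    refine ⟨?_, by simpa only [e1] using hi.2.2.1⟩
    rcases Sym2.eq_iff.1 e2 with ⟨a, c⟩ | ⟨a, c⟩
    · have := hi.2.1
      rwa [a, c] at this
    · have := hi.2.1
      rw [a, c] at this
      exact this.symm'
  · intro l e he v hv
    simp only [he, dif_pos] at hv
    rw [← hidx2 l e he]
    rcases (h1 _).2.2.2 v hv with h | h
    · rw [h]; exact Sym2.mem_mk_left _ _
    · rw [h]; exact Sym2.mem_mk_right _ _
  · intro l l' e he e' he' hne x hx hx'
    simp only [he, he', dif_pos] at hx hx'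
    have hii : idx l e he ≠ idx l' e' he' := by
      intro h
      apply hne
      rw [Prod.mk.injEq]
      refine ⟨?_, ?_⟩
      · rw [← hidx1 l e he, ← hidx1 l' e' he', h]
      · rw [← hidx2 l e he, ← hidx2 l' e' he', h]
    exact (h2 _ _ hii x hx hx').resolve_right (notMem_empty _)

lemma phi_of_forests {V L : Type} (w : V → Pl) (hw : Function.Injective w)
    (T : L → SimpleGraph V) (arc : L → Sym2 V → Set Pl)
    (h1 : ∀ l p q, (T l).Adj p q → IsArc (arc l s(p, q)) (w p) (w q))
    (h2 : ∀ l, ∀ e ∈ (T l).edgeSet, ∀ v, w v ∈ arc l e → v ∈ e)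
    (h3 : ∀ l l', ∀ e ∈ (T l).edgeSet, ∀ e' ∈ (T l').edgeSet, (l, e) ≠ (l', e') →
        ∀ x ∈ arc l e, x ∈ arc l' e' → x ∈ range w) : PhiG (⨆ l, T l) := by
  let φ : Pl → ℂ := Complex.orthonormalBasisOneI.repr.symm
  have hφc : Continuous φ := Complex.orthonormalBasisOneI.repr.symm.continuous
  have hφi : Function.Injective φ := Complex.orthonormalBasisOneI.repr.symm.injective
  refine ⟨fun v => φ (w v), fun u v => φ '' {x | ∃ l, (T l).Adj u v ∧ x ∈ arc l s(u, v)}, ?_, ?_⟩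
  · intro u v huv
    rw [SimpleGraph.iSup_adj] at huv
    obtain ⟨l, hl⟩ := huv
    obtain ⟨γ, _, hγ⟩ := h1 l u v hl
    refine ⟨γ.map hφc, fun t => ⟨γ t, ⟨l, hl, ?_⟩, rfl⟩⟩
    rw [← hγ]; exact mem_range_self t
  · intro a b c d _ _ hac had hbc hbd
    rw [Set.disjoint_left]
    rintro _ ⟨x, ⟨l, hl, hx⟩, rfl⟩ ⟨y, ⟨l', hl', hy⟩, hyx⟩
    have := hφi hyx
    subst this
    obtain ⟨v, rfl⟩ := h3 l l' s(a, b) hl s(c, d) hl' (by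
      intro h
      rcases Sym2.eq_iff.1 (Prod.mk.inj h).2 with h | h
      · exact hac h.1
      · exact had h.1) y hx hy
    have m1 := h2 l _ hl v hx
    have m2 := h2 l' _ hl' v hy
    rw [Sym2.mem_iff] at m1 m2
    grind

lemma induce_conn {V : Type} (G : SimpleGraph V) (C : Set V) (p : V) (hp : p ∈ C)
    (hcl : ∀ u v, u ∈ C → G.Adj u v → v ∈ C) (hr : ∀ v ∈ C, G.Reachable p v) :
    (G.induce C).Connected := by
  have key : ∀ v, Relation.ReflTransGen G.Adj p v →
      ∃ hv : v ∈ C, (G.induce C).Reachable ⟨p, hp⟩ ⟨v, hv⟩ := by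
    intro v h
    induction h with
    | refl => exact ⟨hp, SimpleGraph.Reachable.refl _⟩
    | tail _ hadj ih =>
      obtain ⟨hu, hu'⟩ := ih
      refine ⟨hcl _ _ hu hadj, hu'.trans (SimpleGraph.Adj.reachable ?_)⟩
      exact hadj
  have : Nonempty C := ⟨⟨p, hp⟩⟩
  have k2 : ∀ v : C, (G.induce C).Reachable ⟨p, hp⟩ v := fun v =>
    (key v.1 ((SimpleGraph.reachable_iff_reflTransGen _ _).1 (hr v.1 v.2))).2
  exact ⟨fun u v => (k2 u).symm.trans (k2 v)⟩

end PartPJ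

/-- **Proposition (redrawing, general b).** Let `b ≥ 2`, `k > 2b`, and let `𝒜` satisfy
`f_{k+1}(𝒜) = 0` with every `k`-wise and `(k+1)`-wise intersection open with at most
`b` path-connected components. Choose, for each `(k+1)`-element face `σ` of the nerve,
`b` pairwise distinct points `w σ 0, …, w σ (b-1)` of `A_σ` hitting every path-connected
component of `A_σ` (all chosen points being pairwise distinct, so the set `W` of chosen
points has `|W| = b·f_k(𝒜)` elements). Then one can choose for every `k`-element `τ`
a forest `T τ` on the chosen points lying in `A_τ`, whose restriction to (the chosen
points in) each path-connected component of `A_τ` is a tree, together with a drawing of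
`T τ` inside `A_τ`, such that the union multigraph `G = ⋃_τ T τ` on the vertex set `W`
admits a crossing-free drawing inside `⋃ 𝒜` (so `G` is a planar multigraph) and
`|E(G)| ≤ 3|W| + k(b-1)·f_k(𝒜)`. -/
theorem redrawing_forests (b k n : ℕ) (hb : 2 ≤ b) (hk : 2 * b < k)
    (A : Fin n → Set (EuclideanSpace ℝ (Fin 2)))
    (h1 : fNum A (k + 1) = 0)
    (h2 : ∀ σ : Finset (Fin n), σ.card = k ∨ σ.card = k + 1 →
      IsOpen (⋂ i ∈ σ, A i) ∧ AtMostComponents b (⋂ i ∈ σ, A i))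
    (w : NerveTop A k → Fin b → EuclideanSpace ℝ (Fin 2))
    (hw : ∀ (p : NerveTop A k) (j : Fin b), w p j ∈ ⋂ i ∈ p.1, A i)
    (hwinj : Function.Injective fun q : NerveTop A k × Fin b => w q.1 q.2)
    (hwcover : ∀ (p : NerveTop A k), ∀ x ∈ ⋂ i ∈ p.1, A i,
      ∃ j : Fin b, JoinedIn (⋂ i ∈ p.1, A i) x (w p j)) :
    ∃ (T : Finset (Fin n) → SimpleGraph (NerveTop A k × Fin b))
      (arc : Finset (Fin n) → Sym2 (NerveTop A k × Fin b) →
        Set (EuclideanSpace ℝ (Fin 2))),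
      -- only `k`-element sets `τ` carry a graph
      (∀ τ : Finset (Fin n), τ.card ≠ k → T τ = ⊥) ∧
      -- edges of `T τ` join only chosen points lying in `A_τ`, and only points in the
      -- same path-connected component of `A_τ`
      (∀ (τ : Finset (Fin n)) (p q : NerveTop A k × Fin b), (T τ).Adj p q →
        τ ⊆ p.1.1 ∧ τ ⊆ q.1.1 ∧
          JoinedIn (⋂ i ∈ τ, A i) (w p.1 p.2) (w q.1 q.2)) ∧
      -- the restriction of the forest `T τ` to the chosen points in any path-connected
      -- component of `A_τ` is a tree on those points
      (∀ τ : Finset (Fin n), τ.card = k → ∀ p : NerveTop A k × Fin b, τ ⊆ p.1.1 →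
        ((T τ).induce {q : NerveTop A k × Fin b | τ ⊆ q.1.1 ∧
          JoinedIn (⋂ i ∈ τ, A i) (w p.1 p.2) (w q.1 q.2)}).IsTree) ∧
      -- every edge of `T τ` is drawn as an arc (image of an injective path) lying
      -- inside `A_τ` (hence inside `⋃ 𝒜`)
      (∀ (τ : Finset (Fin n)) (p q : NerveTop A k × Fin b), (T τ).Adj p q →
        (∃ γ : Path (w p.1 p.2) (w q.1 q.2),
          Function.Injective ⇑γ ∧ Set.range ⇑γ = arc τ s(p, q)) ∧
          arc τ s(p, q) ⊆ ⋂ i ∈ τ, A i) ∧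
      -- arcs meet the vertex points of `G` only at their own endpoints
      (∀ (τ : Finset (Fin n)), ∀ e ∈ (T τ).edgeSet, ∀ v : NerveTop A k × Fin b,
        w v.1 v.2 ∈ arc τ e → v ∈ e) ∧
      -- interiors of arcs of distinct (labelled) edges of the multigraph `G` are
      -- pairwise disjoint, so the union drawing of `G` is crossing-free
      (∀ (τ τ' : Finset (Fin n)), ∀ e ∈ (T τ).edgeSet, ∀ e' ∈ (T τ').edgeSet,
        (τ, e) ≠ (τ', e') →
        (arc τ e \ (fun q : NerveTop A k × Fin b => w q.1 q.2) '' {x | x ∈ e}) ∩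
          (arc τ' e' \ (fun q : NerveTop A k × Fin b => w q.1 q.2) '' {x | x ∈ e'})
          = ∅) ∧
      -- the multigraph `G` has at most `3|W| + k(b-1)·f_k(𝒜)` edges, where
      -- `|W| = b·f_k(𝒜)`
      (∑ τ ∈ Finset.univ.filter (fun τ : Finset (Fin n) => τ.card = k),
          Nat.card (T τ).edgeSet)
        ≤ 3 * (b * fNum A k) + k * (b - 1) * fNum A k := by
  classical
  have hD := final_drawing b k n A h1 (fun σ hσ => (h2 σ hσ).1) w hw hwinj hwcover
  obtain ⟨T, arc, hac, hre, harc, hvert, hcross⟩ := forests_of_drawing _ hwinj _ hD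
  have hphi := phi_of_forests _ hwinj T arc (fun l p q h => (harc l p q h).1) hvert hcross
  let T' : Finset (Fin n) → SimpleGraph (NerveTop A k × Fin b) := fun τ =>
    if h : τ.card = k then T ⟨τ, h⟩ else ⊥
  let arc' : Finset (Fin n) → Sym2 (NerveTop A k × Fin b) →
      Set (EuclideanSpace ℝ (Fin 2)) := fun τ e =>
    if h : τ.card = k then arc ⟨τ, h⟩ e else ∅
  have hT' : ∀ τ (h : τ.card = k), T' τ = T ⟨τ, h⟩ := fun τ h => dif_pos h
  have harc' : ∀ τ (h : τ.card = k), arc' τ = arc ⟨τ, h⟩ := fun τ h => by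
    funext e; exact dif_pos h
  have hcard : ∀ τ, ∀ e ∈ (T' τ).edgeSet, τ.card = k := by
    intro τ e he
    by_contra hne
    have hbot : T' τ = ⊥ := dif_neg hne
    rw [hbot, SimpleGraph.edgeSet_bot] at he
    exact he
  have hadj : ∀ τ p q, (T' τ).Adj p q → τ ⊆ p.1.1 ∧ τ ⊆ q.1.1 ∧
      JoinedIn (⋂ i ∈ τ, A i) (w p.1 p.2) (w q.1 q.2) := by
    intro τ p q hpq
    have hc := hcard τ s(p, q) hpq
    rw [hT' τ hc] at hpq
    have ha := harc _ _ _ hpq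
    have hj : JoinedIn (⋂ i ∈ τ, A i) (w p.1 p.2) (w q.1 q.2) := ha.1.joinedIn ha.2
    exact ⟨nerve_sub h1 τ p.1.1 p.1.2.1 _ hj.source_mem (hw _ _),
      nerve_sub h1 τ q.1.1 q.1.2.1 _ hj.target_mem (hw _ _), hj⟩
  have hacy : ∀ τ, (T' τ).IsAcyclic := by
    intro τ
    by_cases hc : τ.card = k
    · rw [hT' τ hc]; exact hac _
    · have hbot : T' τ = ⊥ := dif_neg hc
      rw [hbot]; exact SimpleGraph.isAcyclic_bot
  refine ⟨T', arc', fun τ h => dif_neg h, hadj, ?_, ?_, ?_, ?_, ?_⟩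
  · intro τ hc p hp
    refine ⟨induce_conn (T' τ) _ p ?_ ?_ ?_, (hacy τ).induce _⟩
    · exact ⟨hp, JoinedIn.refl (inter_mono hp (hw _ _))⟩
    · rintro u v ⟨hu1, hu2⟩ huv
      have := hadj τ u v huv
      exact ⟨this.2.1, hu2.trans this.2.2⟩
    · rintro v ⟨hv1, hv2⟩
      rw [hT' τ hc]
      exact hre _ _ _ hv2
  · intro τ p q hpq
    have hc := hcard τ s(p, q) hpq
    rw [hT' τ hc] at hpq
    rw [harc' τ hc]
    exact harc _ _ _ hpq
  · intro τ e he v hv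
    have hc := hcard τ e he
    rw [hT' τ hc] at he
    rw [harc' τ hc] at hv
    exact hvert _ e he v hv
  · intro τ τ' e he e' he' hne
    have hc := hcard τ e he
    have hc' := hcard τ' e' he'
    rw [hT' τ hc] at he
    rw [hT' τ' hc'] at he'
    rw [harc' τ hc, harc' τ' hc', Set.eq_empty_iff_forall_notMem]
    rintro x ⟨⟨hx1, hx2⟩, ⟨hx3, hx4⟩⟩
    obtain ⟨v, rfl⟩ := hcross _ _ e he e' he' (by
      intro h
      apply hne
      have h' := Prod.mk.inj h
      rw [Prod.mk.injEq]
      exact ⟨congrArg Subtype.val h'.1, h'.2⟩) x hx1 hx3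
    exact hx2 ⟨v, hvert _ e he v hx1, rfl⟩
  · have := Fintype.ofFinite (NerveTop A k × Fin b)
    have hm := mader _ hphi
    rw [← Nat.card_eq_fintype_card] at hm
    exact count_edges (P := NerveTop A k) (by omega) (fun p => p.1) Subtype.val_injective
      (fun p => p.2.1) T' hacy (fun τ p q h => ⟨(hadj τ p q h).1, (hadj τ p q h).2.1⟩)
      (⨆ l, T l) (fun τ hc => by rw [hT' τ hc]; exact le_iSup T ⟨τ, hc⟩) hm
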